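/- arXiv:1403.1409 — 2 statements merged into one kernel-verified Lean document; each statement's English description precedes it below -/
import Mathlib

section
/- Let K be an algebraically closed field, R = K[x_0,…,x_r], Z ⊂ ℙ^r a finite reduced set of points with saturated homogeneous ideal I_Z, L a general linear form, and J = (I_Z + (L))/(L) ⊆ S = R/(L) ≅ K[x_1,…,x_r] the artinian reduction, with A = S/J. Fix an integer n and assume that h_A(n) ≥ n+1 and h_A(n+1) = h_A(n)^{⟨n⟩} − 1 (almost maximal growth, i.e. the hypotheses of one of the two base-locus theorems hold). Then the base locus of [I_Z]_n in ℙ^r is a scheme of dimension either MG(h_A(n),n) or MG(h_A(n),n) + 1. -/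
open MvPolynomial

/-- The Hilbert function of `S/I` in degree `t`: the dimension over `K` of the image of the
space of homogeneous polynomials of degree `t` in the quotient `S/I`. -/
noncomputable def hilb {K : Type*} [Field K] {σ : Type*} (I : Ideal (MvPolynomial σ K)) (t : ℕ) : ℕ :=
  Module.finrank K
    ((homogeneousSubmodule σ K t).map (Ideal.Quotient.mkₐ K I).toLinearMap)

/-- The ideal generated by the degree-`n` component of `I`, i.e. by all homogeneous elements of
`I` of degree `n`.  Its zero locus is the base locus of the linear system `[I]_n`. -/
noncomputable def compIdeal {K : Type*} [Field K] {σ : Type*} (I : Ideal (MvPolynomial σ K)) (n : ℕ) :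
    Ideal (MvPolynomial σ K) :=
  Ideal.span ((I : Set (MvPolynomial σ K)) ∩ (homogeneousSubmodule σ K n : Set (MvPolynomial σ K)))

/-- The first difference of the Hilbert function of `R/I`; for the saturated ideal of a finite
set of points this is the `h`-vector, i.e. the Hilbert function of an artinian reduction by a
general linear form. -/
noncomputable def hvec {K : Type*} [Field K] {σ : Type*} (I : Ideal (MvPolynomial σ K)) : ℕ → ℕ
  | 0 => hilb I 0
  | t + 1 => hilb I (t + 1) - hilb I t

/-- The saturated homogeneous ideal of a (finite) set of points of `ℙ^{m-1}`, the points being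
given by (nonzero) representative vectors: a polynomial lies in this ideal iff it vanishes at
every scalar multiple of every representative, i.e. iff all of its homogeneous components vanish
at the corresponding projective points. -/
noncomputable def pointsIdeal {K : Type*} [Field K] {m : ℕ} (Z : Set (Fin m → K)) :
    Ideal (MvPolynomial (Fin m) K) :=
  ⨅ v ∈ Z, ⨅ c : K, RingHom.ker (eval (c • v))

/-- Macaulay's bound `k^{⟨i⟩}`: if `k = C(k_i,i) + C(k_{i-1},i-1) + ⋯ + C(k_j,j)` is the
`i`-binomial expansion of `k`, then `macaulayUp i k = C(k_i+1,i+1) + ⋯ + C(k_j+1,j+1)`. -/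
def macaulayUp : ℕ → ℕ → ℕ
  | 0, _ => 0
  | i + 1, k =>
    if k = 0 then 0
    else
      Nat.choose (Nat.findGreatest (fun b => Nat.choose b (i + 1) ≤ k) (k + i + 1) + 1) (i + 2) +
        macaulayUp i
          (k - Nat.choose (Nat.findGreatest (fun b => Nat.choose b (i + 1) ≤ k) (k + i + 1)) (i + 1))

/-- The MG-dimension `MG(k,n) = k_n - n`, where `C(k_n,n)` is the leading term of the
`n`-binomial expansion of `k` (so `k_n` is the largest `b` with `C(b,n) ≤ k`). -/
def MGdim (k n : ℕ) : ℕ :=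
  Nat.findGreatest (fun b => Nat.choose b n ≤ k) (k + n) - n

def kk (n c : ℕ) : ℕ := Nat.findGreatest (fun b => Nat.choose b n ≤ c) (c + n)

lemma kk_le {n c : ℕ} (hn : 1 ≤ n) : Nat.choose (kk n c) n ≤ c := by
  have := Nat.findGreatest_spec (P := fun b => Nat.choose b n ≤ c) (m := 0) (n := c + n) (by omega)
    (by simp [Nat.choose_eq_zero_of_lt (show 0 < n by omega)])
  exact this

lemma lt_choose_add {n c : ℕ} (hn : 1 ≤ n) : c < Nat.choose (c + n) n := by
  induction c with
  | zero => simp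
  | succ c ih =>
    obtain ⟨m, rfl⟩ : ∃ m, n = m + 1 := ⟨n - 1, by omega⟩
    have h : c + 1 + (m + 1) = (c + (m + 1)) + 1 := by ring
    rw [h, Nat.choose_succ_succ]
    have : 0 < Nat.choose (c + (m + 1)) m := Nat.choose_pos (by omega)
    simp only [Nat.succ_eq_add_one] at *
    omega

lemma kk_unique {n c k : ℕ} (hn : 1 ≤ n) (h1 : Nat.choose k n ≤ c) (h2 : c < Nat.choose (k + 1) n) :
    kk n c = k := by
  unfold kk
  rw [Nat.findGreatest_eq_iff]
  refine ⟨?_, fun _ => h1, ?_⟩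
  · by_contra h
    have h3 := lt_choose_add (n := n) (c := c) hn
    have := Nat.choose_le_choose (c := n) (show c + n ≤ k by omega)
    omega
  · intro m hm _ h
    have := Nat.choose_le_choose (c := n) (show k + 1 ≤ m by omega)
    omega

lemma lt_kk {n c : ℕ} (hn : 1 ≤ n) : c < Nat.choose (kk n c + 1) n := by
  by_contra h
  push Not at h
  have h4 := lt_choose_add (n := n) (c := c) hn
  have h5 : kk n c + 1 ≤ c + n := by
    by_contra h'
    have := Nat.choose_le_choose (c := n) (show c + n ≤ kk n c + 1 by omega)
    omega
  have := Nat.le_findGreatest (P := fun b => Nat.choose b n ≤ c) h5 h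
  unfold kk at *
  omega

/-- `c_{⟨n⟩}` -/
def dn : ℕ → ℕ → ℕ
  | 0, k => k
  | i + 1, k => if k = 0 then 0 else
      Nat.choose (kk (i + 1) k - 1) (i + 1) + dn i (k - Nat.choose (kk (i + 1) k) (i + 1))

@[simp] lemma dn_zero (n : ℕ) : dn n 0 = 0 := by cases n <;> simp [dn]

/-- block decomposition -/
lemma exists_block (m c : ℕ) : ∃ k c', c = Nat.choose k (m + 1) + c' ∧ c' < Nat.choose k m := by
  refine ⟨kk (m+1) c, c - Nat.choose (kk (m+1) c) (m+1), ?_, ?_⟩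
  · have := kk_le (n := m + 1) (c := c) (by omega)
    omega
  · have := kk_le (n := m + 1) (c := c) (by omega)
    have h2 := lt_kk (n := m + 1) (c := c) (by omega)
    rw [Nat.choose_succ_succ] at h2
    simp only [Nat.succ_eq_add_one] at h2
    omega

lemma dn_block0 {m k c' : ℕ} (h : c' < Nat.choose (k + 1) m) :
    dn (m + 1) (Nat.choose (k + 1) (m + 1) + c') = Nat.choose k (m + 1) + dn m c' := by
  have hk : m ≤ k + 1 := by
    by_contra h'
    rw [Nat.choose_eq_zero_of_lt (by omega)] at h; omega
  rcases hk.lt_or_eq with hk | hk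
  · have e : kk (m + 1) (Nat.choose (k + 1) (m + 1) + c') = k + 1 := by
      apply kk_unique (by omega) (by omega)
      rw [Nat.choose_succ_succ (k + 1)]
      simp only [Nat.succ_eq_add_one]
      omega
    have hp : 0 < Nat.choose (k + 1) (m + 1) := Nat.choose_pos (by omega)
    rw [dn, if_neg (by omega), e]
    simp
  · subst hk
    simp at h
    subst h
    simp [Nat.choose_eq_zero_of_lt (show k < k + 1 + 1 by omega)]

lemma dn_choose (m j : ℕ) : dn m (Nat.choose (j + 1) m) = Nat.choose j m := by
  cases m with
  | zero => simp [dn]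
  | succ m =>
    rcases Nat.eq_zero_or_pos (Nat.choose (j + 1) m) with h | h
    · rw [Nat.choose_eq_zero_iff] at h
      rw [Nat.choose_eq_zero_of_lt (by omega), Nat.choose_eq_zero_of_lt (by omega)]; simp
    · simpa using dn_block0 h

lemma dn_block {m k c' : ℕ} (h : c' ≤ Nat.choose (k + 1) m) :
    dn (m + 1) (Nat.choose (k + 1) (m + 1) + c') = Nat.choose k (m + 1) + dn m c' := by
  rcases h.lt_or_eq with h | h
  · exact dn_block0 h
  · subst h
    have := dn_choose (m + 1) (k + 1)
    rw [Nat.choose_succ_succ (k + 1)] at this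
    simp only [Nat.succ_eq_add_one] at this
    rw [add_comm (Nat.choose (k + 1) m)] at this
    rw [this, dn_choose, Nat.choose_succ_succ, add_comm]

lemma dn_step (m c : ℕ) : dn m c ≤ dn m (c + 1) ∧ dn m (c + 1) ≤ dn m c + 1 := by
  induction m generalizing c with
  | zero => simp [dn]
  | succ m ih =>
    obtain ⟨k, c', rfl, h⟩ := exists_block m c
    cases k with
    | zero =>
      cases m with
      | zero =>
        simp at h; subst h
        have := dn_choose 1 0
        simp at this
        simp [this]
      | succ m => simp at h
    | succ k =>
      rw [dn_block0 h, add_assoc, dn_block (by omega)]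
      have := ih c'
      omega

lemma dn_mono (m : ℕ) : Monotone (dn m) := monotone_nat_of_le_succ fun c => (dn_step m c).1

lemma dn_lip (m : ℕ) {a b : ℕ} (h : a ≤ b) : a + dn m b ≤ b + dn m a := by
  induction b, h using Nat.le_induction with
  | base => rfl
  | succ b _ ih => have := (dn_step m b).2; omega

lemma dn_le (m c : ℕ) : dn m c ≤ c := by have := dn_lip m (Nat.zero_le c); simp at this; omega

lemma dn_strict {m k c : ℕ} (hk : m + 1 ≤ k) (h : c < Nat.choose k m) :
    dn m c < Nat.choose (k - 1) m := by
  induction m generalizing k c with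
  | zero => simp at h; subst h; simp [dn]
  | succ m ih =>
    obtain ⟨i, rfl⟩ : ∃ i, k = i + 2 := ⟨k - 2, by omega⟩
    have hp : 0 < Nat.choose (i + 1) m := Nat.choose_pos (by omega)
    have e : Nat.choose (i + 2) (m + 1) = Nat.choose (i+1) m + Nat.choose (i+1) (m+1) := Nat.choose_succ_succ _ _
    have e2 : Nat.choose (i + 1) (m + 1) = Nat.choose i m + Nat.choose i (m+1) := Nat.choose_succ_succ _ _
    have h1 := dn_mono (m + 1) (show c ≤ Nat.choose (i+1) (m+1) + (Nat.choose (i+1) m - 1) by omega)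
    rw [dn_block (by omega)] at h1
    have h2 := ih (k := i + 1) (c := Nat.choose (i+1) m - 1) (by omega) (by omega)
    simp at h2 ⊢
    omega

lemma dn_lt {m c : ℕ} (hc : 1 ≤ c) : dn (m + 1) c < c := by
  obtain ⟨k, c', rfl, h⟩ := exists_block m c
  cases k with
  | zero =>
    cases m with
    | zero => simp at h; subst h; simp at hc
    | succ m => simp at h
  | succ k =>
    rw [dn_block0 h]
    have := dn_le m c'
    have e2 : Nat.choose (k + 1) (m + 1) = Nat.choose k m + Nat.choose k (m+1) := Nat.choose_succ_succ _ _
    rcases Nat.eq_zero_or_pos (Nat.choose k m) with h0 | h0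
    · rw [Nat.choose_eq_zero_iff] at h0
      exfalso
      have hm : m ≤ k + 1 := by
        by_contra h'
        rw [Nat.choose_eq_zero_of_lt (by omega)] at h; omega
      have : m = k + 1 := by omega
      subst this
      simp at h
      subst h
      simp [Nat.choose_eq_zero_of_lt (show k+1 < k + 1 + 1 by omega)] at hc
    · omega

/-- Numerical lemma in Green's theorem. -/
lemma green_num (m : ℕ) {c c1 : ℕ} (h1 : c1 ≤ c) (h : c1 ≤ dn m (c - c1) + dn (m + 1) c1) :
    c1 ≤ dn (m + 1) c := by
  induction m generalizing c c1 with
  | zero =>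
    rcases Nat.eq_zero_or_pos c1 with h0 | h0
    · omega
    · have e : ∀ j, dn 1 (j + 1) = j := fun j => by simpa using dn_choose 1 j
      obtain ⟨j, rfl⟩ : ∃ j, c1 = j + 1 := ⟨c1 - 1, by omega⟩
      obtain ⟨i, rfl⟩ : ∃ j, c = j + 1 := ⟨c - 1, by omega⟩
      have e0 : ∀ j, dn 0 j = j := fun _ => rfl
      simp only [zero_add, e, e0] at h ⊢
      omega
  | succ m ih =>
    by_contra hlt
    push Not at hlt
    obtain ⟨k, c', rfl, hc'⟩ := exists_block (m + 1) c
    cases k with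
    | zero => simp at hc'
    | succ k =>
    have hmk : m ≤ k := by
      by_contra h'
      rw [Nat.choose_eq_zero_of_lt (by omega)] at hc'; omega
    rw [dn_block0 hc'] at hlt
    rcases hmk.lt_or_eq with hmk | hmk
    swap
    · subst hmk
      simp at hc'
      subst hc'
      simp [Nat.choose_eq_zero_of_lt (show m+1 < m + 1 + 1 by omega)] at h1
      omega
    have hx := dn_strict (by omega) hc'
    simp only [add_tsub_cancel_right] at hx
    obtain ⟨i, rfl⟩ : ∃ i, k = i + 1 := ⟨k - 1, by omega⟩
    set x := dn (m + 1) c' with hxdef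
    -- minimal choice of c1
    have hl := dn_lip (m + 1 + 1) (show Nat.choose (i + 1) (m + 1 + 1) + (x + 1) ≤ c1 by omega)
    rw [dn_block (by omega)] at hl
    have p1 : Nat.choose (i + 1 + 1) (m + 1 + 1) = Nat.choose (i+1) (m+1) + Nat.choose (i+1) (m+1+1) := Nat.choose_succ_succ _ _
    have p2 : Nat.choose (i + 1) (m + 1 + 1) = Nat.choose i (m+1) + Nat.choose i (m+1+1) := Nat.choose_succ_succ _ _
    rw [p1] at h h1
    have key : dn (m + 1) (Nat.choose (i+1) (m+1) + c' - (x + 1)) + dn (m+1) (x+1) < Nat.choose i (m + 1) + (x + 1) := by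
      rcases Nat.lt_or_ge x c' with hxc | hxc
      · rw [Nat.add_sub_assoc (by omega), dn_block]
        · by_contra hcon
          have := ih (c := c') (c1 := x + 1) (by omega) (by omega)
          omega
        · have := dn_lip (m + 1) hc'.le
          rw [dn_choose] at this
          have p3 : Nat.choose (i + 1 + 1) (m + 1) = Nat.choose (i+1) m + Nat.choose (i+1) (m+1) := Nat.choose_succ_succ _ _
          omega
      · have hc0 : c' = 0 := by
          by_contra h0
          have := dn_lt (m := m) (c := c') (by omega)
          omega
        subst hc0
        simp at hxdef
        rw [hxdef]
        have h1' := dn_lt (m := m) (c := 1) (by omega)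
        have h2 := dn_mono (m + 1) (show Nat.choose (i+1) (m+1) + 0 - (0 + 1) ≤ Nat.choose (i + 1) (m + 1) by omega)
        rw [dn_choose] at h2
        simp only [zero_add] at *
        omega
    have h6 := dn_mono (m + 1) (show Nat.choose (i+1) (m+1) + Nat.choose (i+1) (m+1+1) + c' - c1 ≤ Nat.choose (i+1) (m+1) + c' - (x + 1) by omega)
    omega

lemma up_zero (n : ℕ) : macaulayUp n 0 = 0 := by cases n <;> simp [macaulayUp]

lemma up_block0 {m k c' : ℕ} (h : c' < Nat.choose k m) :
    macaulayUp (m + 1) (Nat.choose k (m + 1) + c') = Nat.choose (k + 1) (m + 2) + macaulayUp m c' := by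
  have hk : m ≤ k := by
    by_contra h'
    rw [Nat.choose_eq_zero_of_lt (by omega)] at h; omega
  rcases hk.lt_or_eq with hk | hk
  · have e : Nat.findGreatest (fun b => Nat.choose b (m + 1) ≤ Nat.choose k (m + 1) + c')
        (Nat.choose k (m + 1) + c' + m + 1) = k := by
      have : kk (m + 1) (Nat.choose k (m + 1) + c') = k := by
        apply kk_unique (by omega) (by omega)
        rw [Nat.choose_succ_succ k]
        simp only [Nat.succ_eq_add_one]
        omega
      exact this
    have hp : 0 < Nat.choose k (m + 1) := Nat.choose_pos (by omega)
    rw [macaulayUp, if_neg (by omega), e]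
    simp
  · subst hk
    simp at h
    subst h
    simp [up_zero]

lemma up_choose (m j : ℕ) : macaulayUp (m + 1) (Nat.choose j (m + 1)) = Nat.choose (j + 1) (m + 2) := by
  rcases Nat.eq_zero_or_pos (Nat.choose j m) with h | h
  · rw [Nat.choose_eq_zero_iff] at h
    rw [Nat.choose_eq_zero_of_lt (by omega), Nat.choose_eq_zero_of_lt (by omega), up_zero]
  · simpa [up_zero] using up_block0 h

lemma up_block {m k c' : ℕ} (h : c' ≤ Nat.choose k (m + 1)) :
    macaulayUp (m + 2) (Nat.choose k (m + 2) + c') = Nat.choose (k + 1) (m + 3) + macaulayUp (m + 1) c' := by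
  rcases h.lt_or_eq with h | h
  · exact up_block0 h
  · subst h
    have := up_choose (m + 1) (k + 1)
    rw [Nat.choose_succ_succ k] at this
    simp only [Nat.succ_eq_add_one] at this
    rw [add_comm (Nat.choose k (m + 1))] at this
    rw [this, up_choose, Nat.choose_succ_succ, add_comm]

/-- `c^{⟨n⟩} = c + (c_{⟨n⟩})^{⟨n⟩}` -/
lemma up_eq (m c : ℕ) : macaulayUp (m + 1) c = c + macaulayUp (m + 1) (dn (m + 1) c) := by
  induction m generalizing c with
  | zero =>
    have e : ∀ j, macaulayUp 1 j = Nat.choose (j + 1) 2 := fun j => by simpa using up_choose 0 j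
    rw [zero_add, e, e]
    cases c with
    | zero => simp
    | succ c =>
      have : dn 1 (c + 1) = c := by simpa using dn_choose 1 c
      rw [this, Nat.choose_succ_succ (c + 1)]
      simp
  | succ m ih =>
    obtain ⟨k, c', rfl, h⟩ := exists_block (m + 1) c
    cases k with
    | zero => simp at h
    | succ k =>
      rw [up_block0 h, dn_block0 h, up_block, ih c']
      · have p : Nat.choose (k + 1 + 1) (m + 3) = Nat.choose (k + 1) (m + 2) + Nat.choose (k + 1) (m + 3) := Nat.choose_succ_succ _ _
        simp only [add_assoc, Nat.reduceAdd] at p ⊢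
        omega
      · have := dn_mono (m + 1) h.le
        rwa [dn_choose] at this

lemma up_strictMono (m : ℕ) : StrictMono (macaulayUp (m + 1)) := by
  intro a b
  induction b using Nat.strong_induction_on generalizing a with
  | _ b ih =>
    intro hab
    rw [up_eq m a, up_eq m b]
    have h1 := dn_mono (m + 1) hab.le
    have h2 := dn_lt (m := m) (c := b) (by omega)
    rcases h1.lt_or_eq with h | h
    · have := ih _ h2 h; omega
    · rw [h]; omega

lemma dn_small {m c : ℕ} (h : c ≤ m + 1) : dn (m + 1) c = 0 := by
  have h1 := dn_strict (m := m + 1) (k := m + 2) (c := c) (by omega) (by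
    rw [Nat.choose_symm_of_eq_add (show m + 2 = (m + 1) + 1 by ring)]; simp; omega)
  simp at h1
  omega

lemma up_small {m c : ℕ} (h : c ≤ m + 1) : macaulayUp (m + 1) c = c := by
  rw [up_eq, dn_small h, up_zero]; rfl

/-- staircase sums -/
def stair (n p : ℕ) : ℕ := ∑ i ∈ Finset.range (n + 1), min (i + 1) p

lemma stair_top (n : ℕ) : stair n (n + 1) = Nat.choose (n + 2) n := by
  induction n with
  | zero => simp [stair]
  | succ n ih =>
    have : stair (n + 1) (n + 1 + 1) = stair n (n + 1) + (n + 2) := by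
      unfold stair
      rw [Finset.sum_range_succ]
      congr 1
      · apply Finset.sum_congr rfl
        intro i hi
        simp at hi
        omega
      · omega
    rw [this, ih, Nat.choose_succ_succ (n + 2), Nat.choose_symm_of_eq_add (show n + 2 = (n + 1) + 1 by ring)]
    simp

lemma stair_succ (n p : ℕ) (hp : p ≤ n + 1) : stair (n + 1) (p + 1) = (n + 2) + stair n p := by
  unfold stair
  rw [Finset.sum_range_succ']
  have : ∑ k ∈ Finset.range (n + 1), min (k + 1 + 1) (p + 1) = ∑ k ∈ Finset.range (n + 1), (min (k + 1) p + 1) :=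
    Finset.sum_congr rfl (fun i _ => by omega)
  rw [this, Finset.sum_add_distrib]
  simp
  omega

lemma stair_mono (n : ℕ) : Monotone (stair n) := by
  intro a b h
  exact Finset.sum_le_sum fun i _ => by omega

lemma dn_stair (n p : ℕ) (hp : p ≤ n + 1) : dn n (stair n p) = p := by
  induction n generalizing p with
  | zero =>
    simp [stair, dn]; omega
  | succ n ih =>
    cases p with
    | zero => simp [stair]
    | succ p =>
      rw [stair_succ n p (by omega)]
      have e : n + 2 = Nat.choose (n + 1 + 1) (n + 1) := by simp
      rw [e, dn_block]
      · rw [ih p (by omega)]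
        simp [add_comm]
      · have := stair_mono n (show p ≤ n + 1 by omega)
        rw [stair_top] at this
        exact this

lemma MGdim_eq (c n : ℕ) : MGdim c n = kk n c - n := rfl

lemma le_MG {n c d : ℕ} (hn : 1 ≤ n) (h : Nat.choose (n + d) n ≤ c) : d ≤ MGdim c n := by
  rw [MGdim_eq]
  by_contra h'
  have h2 := lt_kk (n := n) (c := c) hn
  have := Nat.choose_le_choose (c := n) (show kk n c + 1 ≤ n + d by omega)
  omega

lemma choose_MG_le {n c : ℕ} (hn : 1 ≤ n) (hc : 1 ≤ c) : Nat.choose (n + MGdim c n) n ≤ c := by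
  rw [MGdim_eq]
  have h := kk_le (n := n) (c := c) hn
  rcases le_total n (kk n c) with h1 | h1
  · rwa [show n + (kk n c - n) = kk n c by omega]
  · rw [show n + (kk n c - n) = n by omega]; simpa

lemma lt_choose_MG {n c : ℕ} (hn : 1 ≤ n) : c < Nat.choose (n + MGdim c n + 1) n := by
  rw [MGdim_eq]
  have h2 := lt_kk (n := n) (c := c) hn
  exact h2.trans_le (Nat.choose_le_choose _ (by omega))

lemma dn_choose_MG_le {m c d : ℕ} (h : Nat.choose (m + 1 + (d + 1)) (m + 1) ≤ c) :
    Nat.choose (m + 1 + d) (m + 1) ≤ dn (m + 1) c := by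
  have := dn_mono (m + 1) h
  rwa [show m + 1 + (d + 1) = (m + 1 + d) + 1 by ring, dn_choose] at this

lemma dn_lt_choose_MG {m c d : ℕ} (h : c < Nat.choose (m + 1 + (d + 1)) (m + 1)) :
    dn (m + 1) c < Nat.choose (m + 1 + d) (m + 1) := by
  have := dn_strict (by omega) h
  rwa [show m + 1 + (d + 1) - 1 = (m + 1 + d) by omega] at this

section part2
variable {K : Type*} [Field K] {s : ℕ}

/-- degree n part -/
noncomputable abbrev Hm (K : Type*) [Field K] (s n : ℕ) : Submodule K (MvPolynomial (Fin s) K) :=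
  homogeneousSubmodule (Fin s) K n

instance Hm_fd (n : ℕ) : FiniteDimensional K (Hm K s n) :=
  Module.Finite.iff_fg.2 (homogeneousSubmodule_fg (R := K) (σ := Fin s) n)

lemma fd_le {n : ℕ} {W : Submodule K (MvPolynomial (Fin s) K)} (h : W ≤ Hm K s n) :
    FiniteDimensional K W :=
  Submodule.finiteDimensional_of_le h

/-- linear form -/
noncomputable def lin (v : Fin s → K) : MvPolynomial (Fin s) K := ∑ i, v i • X i

lemma lin_mem (v : Fin s → K) : lin v ∈ Hm K s 1 :=
  Submodule.sum_mem _ fun i _ => Submodule.smul_mem _ _ (isHomogeneous_X K i)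

lemma lin_single (i : Fin s) : lin (Pi.single i (1 : K)) = X i := by
  simp [lin, Pi.single_apply, ite_smul]

lemma eval_lin (a v : Fin s → K) : eval a (lin v) = ∑ i, v i * a i := by
  simp [lin, smul_eval]

lemma mem_one_iff {f : MvPolynomial (Fin s) K} (hf : f ∈ Hm K s 1) : ∃ v, f = lin v := by
  rw [Hm, homogeneousSubmodule_one_eq_span_X] at hf
  obtain ⟨c, hc⟩ := (Submodule.mem_span_range_iff_exists_fun K).1 hf
  exact ⟨c, hc.symm⟩

lemma lin_eq_zero {v : Fin s → K} (h : lin v = 0) : v = 0 := by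
  classical
  ext i
  have := congrArg (eval (Pi.single i (1 : K))) h
  simpa [eval_lin, Pi.single_apply] using this

/-- f times degree n part -/
noncomputable def mulH (f : MvPolynomial (Fin s) K) (n : ℕ) : Submodule K (MvPolynomial (Fin s) K) :=
  (Hm K s n).map (LinearMap.mulLeft K f)

lemma mem_mulH {f g : MvPolynomial (Fin s) K} {n : ℕ} : g ∈ mulH f n ↔ ∃ h ∈ Hm K s n, f * h = g := by
  simp [mulH]

lemma mulH_le {f : MvPolynomial (Fin s) K} (hf : f ∈ Hm K s 1) (n : ℕ) : mulH f n ≤ Hm K s (n + 1) := by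
  rintro g hg
  obtain ⟨h, hh, rfl⟩ := mem_mulH.1 hg
  rw [add_comm]
  exact IsHomogeneous.mul hf hh

/-- codimension -/
noncomputable def cod (n : ℕ) (W : Submodule K (MvPolynomial (Fin s) K)) : ℕ :=
  Module.finrank K (Hm K s n) - Module.finrank K W

lemma cod_add {n : ℕ} {W : Submodule K (MvPolynomial (Fin s) K)} (h : W ≤ Hm K s n) :
    cod n W + Module.finrank K W = Module.finrank K (Hm K s n) :=
  Nat.sub_add_cancel (Submodule.finrank_mono h)

lemma cod_mono {n : ℕ} {W W' : Submodule K (MvPolynomial (Fin s) K)} (h : W ≤ W')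
    (h' : W' ≤ Hm K s n) : cod n W' ≤ cod n W := by
  have := fd_le h'
  have := Submodule.finrank_mono h
  unfold cod; omega

lemma cod_eq {n : ℕ} {W W' : Submodule K (MvPolynomial (Fin s) K)} (h : W ≤ W')
    (h' : W' ≤ Hm K s n) (hc : cod n W ≤ cod n W') : W = W' := by
  have := fd_le h'
  have h1 := cod_add h'
  have h2 := cod_add (h.trans h')
  have := Submodule.finrank_mono h
  exact Submodule.eq_of_le_of_finrank_le h (by omega)

lemma cod_zero {n : ℕ} {W : Submodule K (MvPolynomial (Fin s) K)}
    (h' : W ≤ Hm K s n) (hc : cod n W = 0) : W = Hm K s n :=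
  cod_eq h' le_rfl (by rw [hc]; exact Nat.zero_le _)

@[simp] lemma cod_Hm (n : ℕ) : cod n (Hm K s n) = 0 := by simp [cod]

/-- colon -/
noncomputable def col (n : ℕ) (f : MvPolynomial (Fin s) K) (W : Submodule K (MvPolynomial (Fin s) K)) :
    Submodule K (MvPolynomial (Fin s) K) :=
  Hm K s n ⊓ W.comap (LinearMap.mulLeft K f)

lemma mem_col {n : ℕ} {f g : MvPolynomial (Fin s) K} {W : Submodule K (MvPolynomial (Fin s) K)} :
    g ∈ col n f W ↔ g ∈ Hm K s n ∧ f * g ∈ W := by simp [col]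

lemma col_le {n : ℕ} {f : MvPolynomial (Fin s) K} {W : Submodule K (MvPolynomial (Fin s) K)} :
    col n f W ≤ Hm K s n := inf_le_left

lemma K1 {n : ℕ} {f : MvPolynomial (Fin s) K} (hf : f ∈ Hm K s 1) (hf0 : f ≠ 0)
    {W : Submodule K (MvPolynomial (Fin s) K)} (hW : W ≤ Hm K s (n + 1)) :
    cod (n + 1) W = cod (n + 1) (W ⊔ mulH f n) + cod n (col n f W) := by
  have hm := mulH_le hf n
  have := fd_le hW
  have := fd_le hm
  have hinj : Function.Injective (LinearMap.mulLeft K f) := fun a b h => mul_left_cancel₀ hf0 h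
  have e1 : Module.finrank K (mulH f n) = Module.finrank K (Hm K s n) :=
    (LinearEquiv.finrank_eq (Submodule.equivMapOfInjective _ hinj _)).symm
  have e2 : W ⊓ mulH f n = (col n f W).map (LinearMap.mulLeft K f) := by
    ext g
    simp only [Submodule.mem_inf, mem_mulH, Submodule.mem_map, mem_col, LinearMap.mulLeft_apply]
    constructor
    · rintro ⟨h, k, hk, rfl⟩; exact ⟨k, ⟨hk, h⟩, rfl⟩
    · rintro ⟨k, ⟨hk, h⟩, rfl⟩; exact ⟨h, k, hk, rfl⟩
  have e3 : Module.finrank K (W ⊓ mulH f n : Submodule K _) = Module.finrank K (col n f W) := by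
    rw [e2]; exact (LinearEquiv.finrank_eq (Submodule.equivMapOfInjective _ hinj _)).symm
  have e4 := Submodule.finrank_sup_add_finrank_inf_eq W (mulH f n)
  have e5 := cod_add hW
  have e6 := cod_add (sup_le hW hm)
  have e7 := cod_add (col_le (n := n) (f := f) (W := W))
  omega

/-- generic property -/
def Gen (P : (Fin s → K) → Prop) : Prop :=
  ∃ g : MvPolynomial (Fin s) K, g ≠ 0 ∧ ∀ v, eval v g ≠ 0 → P v

lemma Gen.and {P Q : (Fin s → K) → Prop} (hP : Gen P) (hQ : Gen Q) : Gen fun v => P v ∧ Q v := by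
  obtain ⟨g, hg, h1⟩ := hP
  obtain ⟨g', hg', h2⟩ := hQ
  refine ⟨g * g', mul_ne_zero hg hg', fun v hv => ?_⟩
  rw [map_mul] at hv
  exact ⟨h1 v (left_ne_zero_of_mul hv), h2 v (right_ne_zero_of_mul hv)⟩

lemma Gen.mono {P Q : (Fin s → K) → Prop} (hP : Gen P) (h : ∀ v, P v → Q v) : Gen Q := by
  obtain ⟨g, hg, h1⟩ := hP
  exact ⟨g, hg, fun v hv => h v (h1 v hv)⟩

lemma Gen.of_forall {P : (Fin s → K) → Prop} (h : ∀ v, P v) : Gen P := ⟨1, one_ne_zero, fun v _ => h v⟩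

lemma Gen.finset {ι : Type*} (S : Finset ι) {P : ι → (Fin s → K) → Prop} (h : ∀ i ∈ S, Gen (P i)) :
    Gen fun v => ∀ i ∈ S, P i v := by
  classical
  induction S using Finset.induction_on with
  | empty => exact Gen.of_forall (by simp)
  | insert a S ha ih =>
    refine ((h a (by simp)).and (ih fun i hi => h i (by simp [hi]))).mono fun v hv => ?_
    simpa using hv

lemma Gen.exists [Infinite K] {P : (Fin s → K) → Prop} (hP : Gen P) : ∃ v, P v := by
  obtain ⟨g, hg, h1⟩ := hP
  by_contra! h
  exact hg (MvPolynomial.funext fun v => by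
    by_contra hv
    exact h v (h1 v (by simpa using hv)))

lemma Gen.notMem {P : Submodule K (MvPolynomial (Fin s) K)} {i : Fin s} (hi : X i ∉ P) :
    Gen fun v => lin v ∉ P := by
  obtain ⟨φ, h1, h2⟩ := Submodule.exists_le_ker_of_notMem hi
  refine ⟨∑ k, φ (X k) • X k, fun h => h1 ?_, fun v hv hm => hv ?_⟩
  · have := lin_eq_zero (v := fun k => φ (X k)) h
    exact congrFun this i
  · have := h2 hm
    rw [LinearMap.mem_ker, lin, map_sum] at this
    simp only [map_smul, smul_eq_mul] at this
    simp only [map_sum, smul_eval, eval_X]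
    rw [← this]
    exact Finset.sum_congr rfl fun _ _ => mul_comm _ _

lemma Gen.rank {U Q : Type*} [AddCommGroup U] [Module K U] [AddCommGroup Q] [Module K Q]
    [FiniteDimensional K U] (F : (Fin s → K) →ₗ[K] U →ₗ[K] Q) (v0 : Fin s → K) :
    Gen fun v => Module.finrank K (LinearMap.range (F v0)) ≤ Module.finrank K (LinearMap.range (F v)) := by
  set ρ := Module.finrank K (LinearMap.range (F v0)) with hρ
  let b := Module.finBasis K (LinearMap.range (F v0))
  choose u hu using fun j => (b j).2
  have hli : LinearIndependent K (fun j => (b j : Q)) :=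
    b.linearIndependent.map' (Submodule.subtype _) (Submodule.ker_subtype _)
  obtain ⟨π, hπ⟩ := LinearMap.exists_leftInverse_of_injective
    (Fintype.linearCombination K (fun j => (b j : Q))) (LinearMap.ker_eq_bot.2 (linearIndependent_iff_injective_fintypeLinearCombination.1 hli))
  have hπ' : ∀ j, π (b j : Q) = Pi.single j 1 := by
    intro j
    have := LinearMap.congr_fun hπ (Pi.single j 1)
    simpa [Fintype.linearCombination_apply_single] using this
  let M : Matrix (Fin ρ) (Fin ρ) (MvPolynomial (Fin s) K) :=
    Matrix.of fun i j => ∑ k, C (π (F (Pi.single k 1) (u j)) i) * X k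
  have hM : ∀ v, eval v M.det = (Matrix.of fun i j => π (F v (u j)) i).det := by
    intro v
    rw [RingHom.map_det]
    congr 1
    ext i j
    have hv : v = ∑ k, v k • Pi.single k (1 : K) := by
      ext i; simp [Pi.single_apply]
    conv_rhs => rw [hv]
    simp [M, mul_comm]
  refine ⟨M.det, fun h => ?_, fun v hv => ?_⟩
  · have := hM v0
    rw [h, map_zero] at this
    have e : (Matrix.of fun i j => π (F v0 (u j)) i) = (1 : Matrix (Fin ρ) (Fin ρ) K) := by
      ext i j
      simp [hu, hπ', Matrix.one_apply, Pi.single_apply]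
    rw [e] at this
    simp at this
  · rw [hM] at hv
    have h1 := Matrix.linearIndependent_cols_of_det_ne_zero hv
    have h2 : LinearIndependent K (fun j => F v (u j)) := by
      apply LinearIndependent.of_comp π
      exact h1
    have h3 : LinearIndependent K (fun j => (⟨F v (u j), LinearMap.mem_range_self _ _⟩ : LinearMap.range (F v))) :=
      LinearIndependent.of_comp (Submodule.subtype _) h2
    simpa using h3.fintype_card_le_finrank

lemma finrank_sup_eq {V : Type*} [AddCommGroup V] [Module K V] (W N : Submodule K V)
    [FiniteDimensional K W] [FiniteDimensional K N] :
    Module.finrank K (W ⊔ N : Submodule K V) =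
      Module.finrank K W + Module.finrank K (N.map W.mkQ) := by
  have h1 := Submodule.finrank_sup_add_finrank_inf_eq W N
  have h2 := LinearMap.finrank_range_add_finrank_ker (W.mkQ.domRestrict N)
  rw [LinearMap.range_domRestrict, LinearMap.ker_domRestrict, Submodule.ker_mkQ] at h2
  have h3 : Module.finrank K (W ⊓ N : Submodule K V) = Module.finrank K (Submodule.submoduleOf W N) := by
    rw [← Submodule.finrank_map_subtype_eq N, Submodule.submoduleOf, Submodule.map_comap_subtype, inf_comm]
  change _ + Module.finrank K (Submodule.submoduleOf W N) = _ at h2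
  omega

lemma Gen.opn {m k : ℕ} {W : Submodule K (MvPolynomial (Fin s) K)} (hW : W ≤ Hm K s (m + 1))
    {v0 : Fin s → K} (h : cod (m + 1) (W ⊔ mulH (lin v0) m) ≤ k) :
    Gen fun v => cod (m + 1) (W ⊔ mulH (lin v) m) ≤ k := by
  have := fd_le hW
  let F : (Fin s → K) →ₗ[K] (Hm K s m) →ₗ[K] (MvPolynomial (Fin s) K ⧸ W) :=
    { toFun := fun v => (W.mkQ ∘ₗ LinearMap.mulLeft K (lin v)) ∘ₗ (Hm K s m).subtype
      map_add' := fun v w => by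
        ext f; simp [lin, add_smul, Finset.sum_add_distrib, add_mul]
      map_smul' := fun c w => by
        ext f; simp [lin, mul_smul, ← Finset.smul_sum] }
  have hr : ∀ v, LinearMap.range (F v) = (mulH (lin v) m).map W.mkQ := by
    intro v
    simp only [F, LinearMap.coe_mk, AddHom.coe_mk, LinearMap.range_comp, Submodule.range_subtype, mulH]
    rw [Submodule.map_comp]
  refine (Gen.rank F v0).mono fun v hv => ?_
  rw [hr, hr] at hv
  have := fd_le (mulH_le (lin_mem v) m)
  have := fd_le (mulH_le (lin_mem v0) m)
  have h1 := finrank_sup_eq W (mulH (lin v) m)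
  have h2 := finrank_sup_eq W (mulH (lin v0) m)
  unfold cod at *
  omega

end part2

section part3
variable {K : Type*} [Field K] {s : ℕ}

lemma Hm_succ_le {m : ℕ} {W : Submodule K (MvPolynomial (Fin s) K)}
    (h : ∀ i, ∀ f ∈ Hm K s m, X i * f ∈ W) : Hm K s (m + 1) ≤ W := by
  rw [Hm, ← homogeneousSubmodule_one_pow, pow_succ', homogeneousSubmodule_one_pow,
    homogeneousSubmodule_one_eq_span_X, Submodule.mul_le]
  intro f hf g hg
  have : f ∈ W.comap (LinearMap.mulRight K g) := by
    refine (Submodule.span_le.2 ?_) hf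
    rintro _ ⟨i, rfl⟩
    exact h i g hg
  simpa using this

lemma mulH_mono {m : ℕ} {W : Submodule K (MvPolynomial (Fin s) K)} {f : MvPolynomial (Fin s) K}
    (h : ∀ g ∈ Hm K s m, f * g ∈ W) : mulH f m ≤ W := by
  intro g hg
  obtain ⟨k, hk, rfl⟩ := mem_mulH.1 hg
  exact h k hk

lemma mul_mem_mulH {m : ℕ} {f g : MvPolynomial (Fin s) K} (h : g ∈ Hm K s m) : f * g ∈ mulH f m :=
  mem_mulH.2 ⟨g, h, rfl⟩

lemma mul_mem_one {m : ℕ} {f g : MvPolynomial (Fin s) K} (hf : f ∈ Hm K s 1) (h : g ∈ Hm K s m) :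
    f * g ∈ Hm K s (m + 1) := mulH_le hf m (mul_mem_mulH h)

lemma X_mem (i : Fin s) : (X i : MvPolynomial (Fin s) K) ∈ Hm K s 1 := isHomogeneous_X K i

lemma green_aux [Infinite K] (m : ℕ)
    (HM : ∀ V : Submodule K (MvPolynomial (Fin s) K), V ≤ Hm K s m →
      Gen fun v => ∀ V' : Submodule K (MvPolynomial (Fin s) K), V ≤ V' → V' ≤ Hm K s m →
        (∀ k, k + 1 = m → mulH (lin v) k ≤ V') → cod m V' ≤ dn m (cod m V))
    (c : ℕ) : ∀ (W : Submodule K (MvPolynomial (Fin s) K)),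
    W ≤ Hm K s (m + 1) → cod (m + 1) W = c →
    Gen fun v => cod (m + 1) (W ⊔ mulH (lin v) m) ≤ dn (m + 1) c := by
  induction c using Nat.strong_induction_on with
  | _ c ihc =>
  intro W hW hc
  have hle : ∀ v, W ⊔ mulH (lin v) m ≤ Hm K s (m + 1) := fun v => sup_le hW (mulH_le (lin_mem v) m)
  obtain ⟨v0, hv0⟩ : ∃ v0 : Fin s → K, ∀ v, cod (m + 1) (W ⊔ mulH (lin v0) m) ≤
      cod (m + 1) (W ⊔ mulH (lin v) m) :=
    ⟨_, fun v => Function.argmin_le (fun v => cod (m + 1) (W ⊔ mulH (lin v) m)) v⟩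
  refine Gen.opn hW (v0 := v0) ?_
  have hc1 : cod (m + 1) (W ⊔ mulH (lin v0) m) ≤ c := hc ▸ cod_mono le_sup_left (hle v0)
  rcases hc1.eq_or_lt with h | h
  · have : Hm K s (m + 1) ≤ W := by
      apply Hm_succ_le
      intro i f hf
      have h1 := hv0 (Pi.single i 1)
      rw [h, ← hc, lin_single] at h1
      have h2 := cod_eq le_sup_left (by simpa only [lin_single] using hle (Pi.single i 1)) h1
      rw [h2]
      exact Submodule.mem_sup_right (mul_mem_mulH hf)
    have : W = Hm K s (m + 1) := le_antisymm hW this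
    rw [this, cod_Hm] at hc
    omega
  · apply green_num m hc1
    have hL0 : lin v0 ≠ 0 := by
      intro h0
      have : W ⊔ mulH (lin v0) m = W := by
        apply sup_eq_left.2
        rw [h0]
        exact mulH_mono fun g _ => by simp
      rw [this] at h
      omega
    have k0 := K1 (lin_mem v0) hL0 hW
    have g1 := HM (col m (lin v0) W) col_le
    have g2 := ihc _ h (W ⊔ mulH (lin v0) m) (hle v0) rfl
    obtain ⟨v, h1, h2⟩ := (g1.and g2).exists
    have k1 := K1 (lin_mem v0) hL0 (hle v)
    have h3 := h1 (col m (lin v0) (W ⊔ mulH (lin v) m)) ?_ col_le ?_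
    · have : cod m (col m (lin v0) W) = c - cod (m + 1) (W ⊔ mulH (lin v0) m) := by omega
      rw [this] at h3
      have h4 := hv0 v
      rw [sup_right_comm] at h2
      omega
    · intro f hf
      rw [mem_col] at hf ⊢
      exact ⟨hf.1, Submodule.mem_sup_left hf.2⟩
    · rintro k rfl
      apply mulH_mono
      intro g hg
      rw [mem_col]
      refine ⟨mul_mem_one (lin_mem _) hg, Submodule.mem_sup_right ?_⟩
      rw [mul_left_comm]
      exact mul_mem_mulH (mul_mem_one (lin_mem _) hg)

theorem green [Infinite K] (m : ℕ) : ∀ (W : Submodule K (MvPolynomial (Fin s) K)),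
    W ≤ Hm K s (m + 1) →
    Gen fun v => cod (m + 1) (W ⊔ mulH (lin v) m) ≤ dn (m + 1) (cod (m + 1) W) := by
  induction m with
  | zero =>
    intro W hW
    refine green_aux 0 (fun V hV => Gen.of_forall fun v V' h1 h2 _ => ?_) _ W hW rfl
    exact cod_mono h1 h2
  | succ m ih =>
    intro W hW
    refine green_aux (m + 1) (fun V hV => (ih V hV).mono fun v h V' h1 h2 h3 => ?_) _ W hW rfl
    exact (cod_mono (sup_le h1 (h3 m rfl)) h2).trans h

/-- consecutive graded pieces -/
structure Pr (n : ℕ) (A B : Submodule K (MvPolynomial (Fin s) K)) : Prop where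
  le : A ≤ Hm K s n
  le' : B ≤ Hm K s (n + 1)
  mul : ∀ i, ∀ f ∈ A, X i * f ∈ B

lemma Pr.mul_one {n : ℕ} {A B : Submodule K (MvPolynomial (Fin s) K)} (h : Pr n A B)
    {l f : MvPolynomial (Fin s) K} (hl : l ∈ Hm K s 1) (hf : f ∈ A) : l * f ∈ B := by
  obtain ⟨v, rfl⟩ := mem_one_iff hl
  rw [lin, Finset.sum_mul]
  refine Submodule.sum_mem _ fun i _ => ?_
  rw [smul_mul_assoc]
  exact Submodule.smul_mem _ _ (h.mul i f hf)

lemma Pr.sup {n : ℕ} {A B : Submodule K (MvPolynomial (Fin s) K)} (h : Pr (n + 1) A B)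
    {l : MvPolynomial (Fin s) K} (hl : l ∈ Hm K s 1) :
    Pr (n + 1) (A ⊔ mulH l n) (B ⊔ mulH l (n + 1)) where
  le := sup_le h.le (mulH_le hl n)
  le' := sup_le h.le' (mulH_le hl _)
  mul := fun i f hf => by
    obtain ⟨a, ha, b, hb, rfl⟩ := Submodule.mem_sup.1 hf
    obtain ⟨g, hg, rfl⟩ := mem_mulH.1 hb
    rw [mul_add]
    refine Submodule.add_mem_sup (h.mul i a ha) ?_
    rw [mul_left_comm]
    exact mul_mem_mulH (mul_mem_one (X_mem i) hg)

lemma Pr.le_col {n : ℕ} {A B : Submodule K (MvPolynomial (Fin s) K)} (h : Pr n A B)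
    {l : MvPolynomial (Fin s) K} (hl : l ∈ Hm K s 1) : A ≤ col n l B := fun f hf =>
  mem_col.2 ⟨h.le hf, h.mul_one hl hf⟩

lemma Pr.ineq {n : ℕ} {A B : Submodule K (MvPolynomial (Fin s) K)} (h : Pr n A B)
    {l : MvPolynomial (Fin s) K} (hl : l ∈ Hm K s 1) (hl0 : l ≠ 0) :
    cod (n + 1) B ≤ cod (n + 1) (B ⊔ mulH l n) + cod n A := by
  rw [K1 hl hl0 h.le']
  have := cod_mono (h.le_col hl) col_le
  omega

lemma Pr.eq_col {n : ℕ} {A B : Submodule K (MvPolynomial (Fin s) K)} (h : Pr n A B)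
    {l : MvPolynomial (Fin s) K} (hl : l ∈ Hm K s 1) (hl0 : l ≠ 0)
    (h' : cod (n + 1) (B ⊔ mulH l n) + cod n A ≤ cod (n + 1) B) : col n l B = A := by
  rw [K1 hl hl0 h.le'] at h'
  exact (cod_eq (h.le_col hl) col_le (by omega)).symm

lemma Pr.zero {n : ℕ} {A B : Submodule K (MvPolynomial (Fin s) K)} (h : Pr n A B)
    (h0 : cod n A = 0) : cod (n + 1) B = 0 := by
  have := cod_zero h.le h0
  have : B = Hm K s (n + 1) := le_antisymm h.le' (Hm_succ_le fun i f hf => h.mul i f (this ▸ hf))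
  rw [this, cod_Hm]

lemma Gen.lin_ne (i : Fin s) : Gen fun v : Fin s → K => lin v ≠ 0 := by
  have : (X i : MvPolynomial (Fin s) K) ∉ (⊥ : Submodule K _) := by simp
  exact (Gen.notMem this).mono fun v hv h => hv (by simp [h])

lemma Gen.lin_ne' (i : ℕ) (h : i < s) : Gen fun v : Fin s → K => lin v ≠ 0 := Gen.lin_ne ⟨i, h⟩

lemma cod_s_zero {n : ℕ} (W : Submodule K (MvPolynomial (Fin 0) K)) (hW : W ≤ Hm K 0 (n + 1)) :
    cod (n + 1) W = 0 := by
  have : W = Hm K 0 (n + 1) := le_antisymm hW (Hm_succ_le fun i => i.elim0)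
  rw [this, cod_Hm]

theorem macaulay [Infinite K] {m : ℕ} (c : ℕ) : ∀ {A B : Submodule K (MvPolynomial (Fin s) K)},
    Pr (m + 1) A B → cod (m + 1) A = c → cod (m + 2) B ≤ macaulayUp (m + 1) c := by
  induction c using Nat.strong_induction_on with
  | _ c ih =>
  intro A B h hc
  rcases Nat.eq_zero_or_pos c with rfl | hpos
  · rw [h.zero hc]; exact Nat.zero_le _
  rcases Nat.eq_zero_or_pos s with rfl | hs
  · rw [cod_s_zero _ h.le']; exact Nat.zero_le _
  obtain ⟨v, h1, h2⟩ := ((green m A h.le).and (Gen.lin_ne' 0 hs)).exists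
  rw [hc] at h1
  have h3 := h.ineq (lin_mem v) h2
  have h4 : cod (m + 1) (A ⊔ mulH (lin v) m) < c := h1.trans_lt (dn_lt hpos)
  have h5 := ih _ h4 (h.sup (lin_mem v)) rfl
  have h6 := (up_strictMono m).monotone h1
  rw [up_eq]
  change cod (m + 1 + 1) B ≤ _
  change cod (m + 1 + 1) _ ≤ _ at h5
  omega

end part3

section part4
variable {K : Type*} [Field K] {s : ℕ}

/-- irrelevant ideal -/
noncomputable def mId (K : Type*) [Field K] (s : ℕ) : Ideal (MvPolynomial (Fin s) K) :=
  RingHom.ker (eval (0 : Fin s → K))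

instance mId_prime : (mId K s).IsPrime := RingHom.ker_isPrime _

lemma mId_max : (mId K s).IsMaximal :=
  RingHom.ker_isMaximal_of_surjective _ fun c => ⟨C c, by simp⟩

lemma le_mId {f : MvPolynomial (Fin s) K} {m : ℕ} (hf : f ∈ Hm K s (m + 1)) : f ∈ mId K s := by
  have : Hm K s (m + 1) ≤ (mId K s).restrictScalars K :=
    Hm_succ_le fun i f _ => by simp [mId, RingHom.mem_ker]
  exact this hf

lemma mId_le {P : Ideal (MvPolynomial (Fin s) K)} (h : ∀ i, X i ∈ P) : mId K s ≤ P := by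
  have hC : ∀ p : MvPolynomial (Fin s) K, p - C (eval 0 p) ∈ P := by
    intro p
    induction p using MvPolynomial.induction_on with
    | C a => simp
    | add p q hp hq =>
      have := P.add_mem hp hq
      rw [map_add, map_add]
      convert this using 1; ring
    | mul_X p i hp =>
      simp only [map_mul, eval_X, Pi.zero_apply, mul_zero, map_zero, sub_zero]
      exact P.mul_mem_left _ (h i)
  intro f hf
  have := hC f
  rw [mId, RingHom.mem_ker] at hf
  rw [hf] at this
  simpa using this

/-- chain of primes up to the irrelevant ideal -/
def Cl : ℕ → Ideal (MvPolynomial (Fin s) K) → Prop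
  | 0, p => p = mId K s
  | k + 1, p => ∃ q : Ideal (MvPolynomial (Fin s) K), q.IsPrime ∧ p < q ∧ Cl k q

/-- there is a chain of primes over W of length k -/
def Ch (W : Set (MvPolynomial (Fin s) K)) (k : ℕ) : Prop :=
  ∃ p : Ideal (MvPolynomial (Fin s) K), p.IsPrime ∧ W ⊆ p ∧ Cl k p

lemma Ch.mono {W W' : Set (MvPolynomial (Fin s) K)} {k : ℕ} (h : Ch W k)
    (hW : ∀ p : Ideal (MvPolynomial (Fin s) K), p.IsPrime → W ⊆ p → W' ⊆ p) : Ch W' k := by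
  obtain ⟨p, h1, h2, h3⟩ := h
  exact ⟨p, h1, hW p h1 h2, h3⟩

lemma Cl.le {k : ℕ} {p : Ideal (MvPolynomial (Fin s) K)} (h : Cl k p) : p ≤ mId K s := by
  induction k generalizing p with
  | zero => exact le_of_eq h
  | succ k ih =>
    obtain ⟨q, _, h2, h3⟩ := h
    exact h2.le.trans (ih h3)

lemma Cl.lt {k : ℕ} {p : Ideal (MvPolynomial (Fin s) K)} (h : Cl (k + 1) p) : p < mId K s := by
  obtain ⟨q, _, h2, h3⟩ := h
  exact h2.trans_le h3.le

lemma Ch.pred {W : Set (MvPolynomial (Fin s) K)} {k : ℕ} (h : Ch W (k + 1)) : Ch W k := by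
  obtain ⟨p, h1, h2, q, h3, h4, h5⟩ := h
  exact ⟨q, h3, h2.trans h4.le, h5⟩

lemma Ch.anti {W : Set (MvPolynomial (Fin s) K)} {k j : ℕ} (h : Ch W k) (hj : j ≤ k) : Ch W j := by
  induction k with
  | zero => obtain rfl : j = 0 := by omega
            exact h
  | succ k ih =>
    rcases hj.lt_or_eq with h' | h'
    · exact ih h.pred (by omega)
    · subst h'; exact h

lemma Cl.dim {W : Set (MvPolynomial (Fin s) K)} {k : ℕ} : ∀ {p : Ideal (MvPolynomial (Fin s) K)},
    p.IsPrime → W ⊆ p → Cl k p →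
    ∃ l : LTSeries (PrimeSpectrum (MvPolynomial (Fin s) K ⧸ Ideal.span W)), l.length = k ∧
      l.head.asIdeal.comap (Ideal.Quotient.mk _) = p := by
  induction k with
  | zero =>
    intro p hp hW h
    have hp' : (p.map (Ideal.Quotient.mk (Ideal.span W))).IsPrime :=
      Ideal.map_isPrime_of_surjective Ideal.Quotient.mk_surjective
        (by rw [Ideal.mk_ker]; exact Ideal.span_le.2 hW)
    refine ⟨RelSeries.singleton _ ⟨_, hp'⟩, rfl, ?_⟩
    rw [RelSeries.head_singleton]
    rw [Ideal.comap_map_mk (Ideal.span_le.2 hW)]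
  | succ k ih =>
    intro p hp hW h
    obtain ⟨q, h1, h2, h3⟩ := h
    obtain ⟨l, hl, hl'⟩ := ih h1 (hW.trans h2.le) h3
    have hp' : (p.map (Ideal.Quotient.mk (Ideal.span W))).IsPrime :=
      Ideal.map_isPrime_of_surjective Ideal.Quotient.mk_surjective
        (by rw [Ideal.mk_ker]; exact Ideal.span_le.2 hW)
    have hc := Ideal.comap_map_mk (Ideal.span_le.2 hW)
    have hlt : (⟨_, hp'⟩ : PrimeSpectrum _) < l.head := by
      rw [← PrimeSpectrum.asIdeal_lt_asIdeal]
      refine lt_of_le_of_ne ?_ fun h => ?_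
      · exact Ideal.map_le_iff_le_comap.2 (hl' ▸ h2.le)
      · simp only at h
        rw [← h, hc] at hl'
        exact h2.ne hl'
    refine ⟨l.cons ⟨_, hp'⟩ hlt, ?_, ?_⟩
    · rw [RelSeries.cons_length, hl]
    · rw [RelSeries.head_cons]
      exact hc

lemma Ch.dim {W : Set (MvPolynomial (Fin s) K)} {k : ℕ} (h : Ch W k) :
    (k : WithBot ℕ∞) ≤ ringKrullDim (MvPolynomial (Fin s) K ⧸ Ideal.span W) := by
  obtain ⟨p, h1, h2, h3⟩ := h
  obtain ⟨l, hl, _⟩ := Cl.dim h1 h2 h3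
  rw [← hl]
  exact Order.LTSeries.length_le_krullDim l

lemma Cl.height {p0 : Ideal (MvPolynomial (Fin s) K)} {k : ℕ} : ∀ {p : Ideal (MvPolynomial (Fin s) K)},
    p.IsPrime → p0 ≤ p → Cl k p →
    (k : ℕ∞) + (p.map (Ideal.Quotient.mk p0)).height ≤ ((mId K s).map (Ideal.Quotient.mk p0)).height := by
  induction k with
  | zero =>
    intro p _ _ h
    rw [show p = mId K s from h]; simp
  | succ k ih =>
    intro p hp hp0 h
    obtain ⟨q, h1, h2, h3⟩ := h
    refine le_trans ?_ (ih h1 (hp0.trans h2.le) h3)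
    have hp' : (p.map (Ideal.Quotient.mk p0)).IsPrime :=
      Ideal.map_isPrime_of_surjective Ideal.Quotient.mk_surjective (by rwa [Ideal.mk_ker])
    have hq' : (q.map (Ideal.Quotient.mk p0)).IsPrime :=
      Ideal.map_isPrime_of_surjective Ideal.Quotient.mk_surjective
        (by rw [Ideal.mk_ker]; exact hp0.trans h2.le)
    have : p.map (Ideal.Quotient.mk p0) < q.map (Ideal.Quotient.mk p0) := by
      refine lt_of_le_of_ne (Ideal.map_mono h2.le) fun h => h2.ne ?_
      rw [← Ideal.comap_map_mk hp0, h, Ideal.comap_map_mk (hp0.trans h2.le)]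
    have := Ideal.height_add_one_le_of_lt_of_isPrime this
    push_cast
    rw [add_assoc, add_comm 1]
    gcongr

lemma Ch.krull {W : Set (MvPolynomial (Fin s) K)} {k : ℕ} (h : Ch W (k + 1))
    (S : Finset (MvPolynomial (Fin s) K)) (hS : S.card ≤ k) (hSm : ∀ f ∈ S, f ∈ mId K s) :
    Ch (W ∪ S) 1 := by
  classical
  obtain ⟨p, h1, h2, h3⟩ := h
  by_contra hno
  have key : ∀ q : Ideal (MvPolynomial (Fin s) K), q.IsPrime → W ⊆ q → (∀ f ∈ S, f ∈ q) →
      q ≤ mId K s → q = mId K s := by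
    intro q hq hW hS' hle
    by_contra hne
    exact hno ⟨q, hq, Set.union_subset hW hS', _, mId_prime, lt_of_le_of_ne hle hne, rfl⟩
  have hm' : ((mId K s).map (Ideal.Quotient.mk p)).IsPrime :=
      Ideal.map_isPrime_of_surjective Ideal.Quotient.mk_surjective (by rw [Ideal.mk_ker]; exact h3.le)
  have hmin : (mId K s).map (Ideal.Quotient.mk p) ∈
      (Ideal.span ((S.image (Ideal.Quotient.mk p) : Finset _) : Set (MvPolynomial (Fin s) K ⧸ p))).minimalPrimes := by
    refine ⟨⟨hm', ?_⟩, ?_⟩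
    · rw [Ideal.span_le]
      intro x hx
      simp only [Finset.coe_image, Set.mem_image, Finset.mem_coe] at hx
      obtain ⟨f, hf, rfl⟩ := hx
      exact Ideal.mem_map_of_mem _ (hSm f hf)
    · rintro Q ⟨hQ, hQ'⟩ hle
      have hpQ : p ≤ Q.comap (Ideal.Quotient.mk p) := by
        intro x hx
        rw [Ideal.mem_comap, Ideal.Quotient.eq_zero_iff_mem.2 hx]
        exact Q.zero_mem
      have e := key (Q.comap (Ideal.Quotient.mk p)) (hQ.comap _) (h2.trans hpQ) (fun f hf => hQ' (Ideal.subset_span (by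
        simp only [Finset.coe_image, Set.mem_image, Finset.mem_coe]
        exact ⟨f, hf, rfl⟩))) (by
          rw [← Ideal.comap_map_mk h3.le]
          exact Ideal.comap_mono hle)
      rw [← e, Ideal.map_comap_of_surjective _ Ideal.Quotient.mk_surjective]
  have b1 := Ideal.height_le_card_of_mem_minimalPrimes_span_finset hmin
  have b2 := Cl.height h1 le_rfl h3
  have b3 : (k + 1 : ℕ) ≤ ((S.image (Ideal.Quotient.mk p)).card : ℕ∞) :=
    le_trans (le_trans le_self_add b2) b1
  have b4 : k + 1 ≤ (S.image (Ideal.Quotient.mk p)).card := by exact_mod_cast b3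
  have := Finset.card_image_le (s := S) (f := Ideal.Quotient.mk p)
  omega

lemma Ch.bot : Ch ({0} : Set (MvPolynomial (Fin s) K)) s := by
  let σ : ℕ → MvPolynomial (Fin s) K →ₐ[K] MvPolynomial (Fin s) K := fun i =>
    aeval fun j => if j.1 < i then 0 else X j
  have hpr : ∀ i, (RingHom.ker (σ i)).IsPrime := fun i => RingHom.ker_isPrime _
  have hcl : ∀ k, ∀ i, i + k = s → Cl k (RingHom.ker (σ i)) := by
    intro k
    induction k with
    | zero =>
      intro i hi
      change _ = _
      symm
      refine mId_max.eq_of_le (hpr i).ne_top (mId_le fun j => ?_)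
      rw [RingHom.mem_ker]
      have := j.2
      simp only [σ, aeval_X, if_pos (show j.1 < i by omega)]
    | succ k ih =>
      intro i hi
      refine ⟨RingHom.ker (σ (i + 1)), hpr _, ?_, ih (i + 1) (by omega)⟩
      have hcomp : σ (i + 1) = (σ (i + 1)).comp (σ i) := by
        apply MvPolynomial.algHom_ext
        intro j
        simp only [AlgHom.comp_apply, σ, aeval_X]
        by_cases hj : j.1 < i
        · rw [if_pos (by omega), if_pos hj, map_zero]
        · rw [if_neg hj, aeval_X]
      refine lt_of_le_of_ne (fun f hf => ?_) fun h => ?_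
      · rw [RingHom.mem_ker] at hf ⊢
        rw [hcomp, AlgHom.comp_apply, hf, map_zero]
      · have h1 : (X ⟨i, by omega⟩ : MvPolynomial (Fin s) K) ∈ RingHom.ker (σ (i + 1)) := by
          rw [RingHom.mem_ker]; simp [σ]
        rw [← h, RingHom.mem_ker] at h1
        simp [σ] at h1
  exact ⟨RingHom.ker (σ 0), hpr 0, by simp, hcl s 0 (by simp)⟩

lemma eval_smul_hom {m : ℕ} {f : MvPolynomial (Fin s) K} (hf : f ∈ Hm K s m) (c : K) (a : Fin s → K) :
    eval (c • a) f = c ^ m * eval a f := by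
  induction m generalizing f with
  | zero =>
    rw [mem_homogeneousSubmodule, ← totalDegree_zero_iff_isHomogeneous, totalDegree_eq_zero_iff_eq_C] at hf
    rw [hf]; simp
  | succ m ih =>
    let W : Submodule K (MvPolynomial (Fin s) K) :=
      { carrier := {f | eval (c • a) f = c ^ (m + 1) * eval a f}
        add_mem' := by
          intro f g hf hg
          simp only [Set.mem_ofPred_eq, map_add] at *
          rw [hf, hg]; ring
        zero_mem' := by simp
        smul_mem' := by
          intro k f hf
          simp only [Set.mem_ofPred_eq, smul_eval] at *
          rw [hf]; ring }
    have : Hm K s (m + 1) ≤ W := by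
      apply Hm_succ_le
      intro i g hg
      change _ = _
      simp only [map_mul, eval_X, ih hg, Pi.smul_apply, smul_eq_mul]
      ring
    exact this hf

lemma Ch.point [Infinite K] {m : ℕ} {W : Submodule K (MvPolynomial (Fin s) K)} (hW : W ≤ Hm K s (m + 1))
    {a : Fin s → K} (ha : a ≠ 0) (h : ∀ f ∈ W, eval a f = 0) : Ch (W : Set (MvPolynomial (Fin s) K)) 1 := by
  let σ : MvPolynomial (Fin s) K →ₐ[K] Polynomial K := aeval fun j => Polynomial.C (a j) * Polynomial.X
  have hσ : ∀ (f : MvPolynomial (Fin s) K) (t : K), (σ f).eval t = eval (t • a) f := by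
    intro f t
    have : (Polynomial.aeval t).comp σ = aeval (t • a) := by
      apply MvPolynomial.algHom_ext
      intro j
      rw [AlgHom.comp_apply]
      simp only [σ, aeval_X, map_mul, Polynomial.aeval_C, Polynomial.aeval_X, Pi.smul_apply, smul_eq_mul]
      exact mul_comm _ _
    have := AlgHom.congr_fun this f
    simpa [Polynomial.coe_aeval_eq_eval, MvPolynomial.aeval_eq_eval] using this
  refine ⟨RingHom.ker σ, RingHom.ker_isPrime _, fun f hf => ?_, mId K s, mId_prime, ?_, rfl⟩
  · rw [SetLike.mem_coe, RingHom.mem_ker]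
    apply Polynomial.funext
    intro t
    rw [hσ, eval_smul_hom (hW hf), h f hf]; simp
  · refine lt_of_le_of_ne (fun f hf => ?_) fun h => ha ?_
    · rw [RingHom.mem_ker] at hf
      rw [mId, RingHom.mem_ker, ← zero_smul K a, ← hσ, hf]; simp
    · ext i
      have : (X i : MvPolynomial (Fin s) K) ∈ RingHom.ker σ := by rw [h]; exact le_mId (X_mem i)
      rw [RingHom.mem_ker] at this
      have h2 := hσ (X i) 1
      rw [this] at h2
      simpa using h2.symm

lemma Ch.drop {m : ℕ} {W : Submodule K (MvPolynomial (Fin s) K)} :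
    Gen fun v => ∀ k, Ch ((W ⊔ mulH (lin v) m : Submodule K _) : Set (MvPolynomial (Fin s) K)) (k + 1) →
      Ch (W : Set (MvPolynomial (Fin s) K)) (k + 2) := by
  have hfin := Ideal.finite_minimalPrimes_of_isNoetherianRing _ (Ideal.span (W : Set (MvPolynomial (Fin s) K)))
  have hg : Gen fun v : Fin s → K => ∀ P ∈ hfin.toFinset, (P = mId K s ∨ lin v ∉ P) := by
    apply Gen.finset
    intro P hP
    rw [Set.Finite.mem_toFinset] at hP
    have hPp : P.IsPrime := hP.1.1
    by_cases hall : ∀ i, X i ∈ P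
    · exact Gen.of_forall fun v => Or.inl (mId_max.eq_of_le hPp.ne_top (mId_le hall)).symm
    · push Not at hall
      obtain ⟨i, hi⟩ := hall
      exact (Gen.notMem (P := P.restrictScalars K) hi).mono fun v hv => Or.inr hv
  refine hg.mono fun v hv k hk => ?_
  obtain ⟨q, h1, h2, h3⟩ := hk
  have hL : lin v ∈ q := by
    have : lin v * lin v ^ m ∈ q := h2 (Submodule.mem_sup_right (mul_mem_mulH (by
      have := IsHomogeneous.pow (lin_mem v) m
      rwa [one_mul] at this)))
    rw [← pow_succ'] at this
    exact h1.mem_of_pow_mem _ this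
  have hWq : (W : Set _) ⊆ (q : Set (MvPolynomial (Fin s) K)) := fun f hf => h2 (Submodule.mem_sup_left hf)
  obtain ⟨P, hP, hPq⟩ := Ideal.exists_minimalPrimes_le (Ideal.span_le.2 hWq)
  refine ⟨P, hP.1.1, fun f hf => hP.1.2 (Ideal.subset_span hf), q, h1, lt_of_le_of_ne hPq fun he => ?_, h3⟩
  rcases hv P (by simpa using hP) with h | h
  · exact absurd (h ▸ he ▸ h3.lt) (lt_irrefl _)
  · exact h (he ▸ hL)

end part4

section part5
variable {K : Type*} [Field K] {s : ℕ}

/-- projection to degree n -/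
noncomputable def prj (K : Type*) [Field K] (s n : ℕ) : MvPolynomial (Fin s) K →ₗ[K] Hm K s n :=
  (homogeneousComponent n).codRestrict (Hm K s n) fun f => homogeneousComponent_mem n f

lemma prj_of_mem {n : ℕ} {f : MvPolynomial (Fin s) K} (hf : f ∈ Hm K s n) : prj K s n f = ⟨f, hf⟩ := by
  ext1
  change homogeneousComponent n f = f
  rw [homogeneousComponent_of_mem hf, if_pos rfl]

lemma exists_aeval_end {V : Type*} [AddCommGroup V] [Module K V] (φ : Fin s → Module.End K V)
    (hcomm : ∀ i j, φ i * φ j = φ j * φ i) :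
    ∃ Φ : MvPolynomial (Fin s) K →ₐ[K] Module.End K V, ∀ i, Φ (X i) = φ i := by
  letI : CommRing (Algebra.adjoin K (Set.range φ)) := Algebra.adjoinCommRingOfComm K (by
    rintro _ ⟨i, rfl⟩ _ ⟨j, rfl⟩
    exact hcomm i j)
  let Ψ : MvPolynomial (Fin s) K →ₐ[K] Algebra.adjoin K (Set.range φ) :=
    aeval fun i => ⟨φ i, Algebra.subset_adjoin ⟨i, rfl⟩⟩
  exact ⟨(Algebra.adjoin K (Set.range φ)).val.comp Ψ, fun i => by simp [Ψ]⟩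

theorem lemmaP [IsAlgClosed K] {m : ℕ} {A B : Submodule K (MvPolynomial (Fin s) K)} (h : Pr (m + 1) A B)
    {L : MvPolynomial (Fin s) K} (hL : L ∈ Hm K s 1) (hsup : A ⊔ mulH L m = Hm K s (m + 1))
    (hcol : col (m + 1) L B = A) (hA : 1 ≤ cod (m + 1) A) :
    ∃ a : Fin s → K, a ≠ 0 ∧ (∀ f ∈ A, eval a f = 0) ∧ (∀ f ∈ B, eval a f = 0) := by
  classical
  set n := m + 1 with hn
  let A' := A.comap (Hm K s n).subtype
  let B' := B.comap (Hm K s (n + 1)).subtype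
  let q : MvPolynomial (Fin s) K →ₗ[K] (Hm K s n ⧸ A') := A'.mkQ ∘ₗ prj K s n
  let q' : MvPolynomial (Fin s) K →ₗ[K] (Hm K s (n + 1) ⧸ B') := B'.mkQ ∘ₗ prj K s (n + 1)
  have hq0 : ∀ f ∈ Hm K s n, (q f = 0 ↔ f ∈ A) := by
    intro f hf
    simp only [q, LinearMap.comp_apply, prj_of_mem hf, Submodule.mkQ_apply, Submodule.Quotient.mk_eq_zero]
    rfl
  have hq0' : ∀ f ∈ Hm K s (n + 1), (q' f = 0 ↔ f ∈ B) := by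
    intro f hf
    simp only [q', LinearMap.comp_apply, prj_of_mem hf, Submodule.mkQ_apply, Submodule.Quotient.mk_eq_zero]
    rfl
  have hqs : ∀ x, ∃ f ∈ Hm K s n, q f = x := by
    intro x
    obtain ⟨f, rfl⟩ := Submodule.mkQ_surjective _ x
    exact ⟨f, f.2, by simp only [q, LinearMap.comp_apply, prj_of_mem f.2]⟩
  have hqs' : ∀ x, ∃ f ∈ Hm K s (n + 1), q' f = x := by
    intro x
    obtain ⟨f, rfl⟩ := Submodule.mkQ_surjective _ x
    exact ⟨f, f.2, by simp only [q', LinearMap.comp_apply, prj_of_mem f.2]⟩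
  have hN : ∀ l ∈ Hm K s 1, ∃ N : (Hm K s n ⧸ A') →ₗ[K] (Hm K s (n + 1) ⧸ B'),
      ∀ f ∈ Hm K s n, N (q f) = q' (l * f) := by
    intro l hl
    let T : Hm K s n →ₗ[K] Hm K s (n + 1) :=
      (LinearMap.mulLeft K l).restrict fun f hf => mul_mem_one hl hf
    have hT : A' ≤ B'.comap T := by
      intro f hf
      exact h.mul_one hl hf
    refine ⟨Submodule.mapQ A' B' T hT, fun f hf => ?_⟩
    simp only [q, q', LinearMap.comp_apply, prj_of_mem hf, prj_of_mem (mul_mem_one hl hf)]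
    rfl
  obtain ⟨NL, hNL⟩ := hN L hL
  choose N hN' using fun i : Fin s => hN (X i) (X_mem i)
  -- every class is a multiple of L
  have hqL : ∀ x, ∃ g ∈ Hm K s m, q (L * g) = x := by
    intro x
    obtain ⟨f, hf, rfl⟩ := hqs x
    rw [← hsup] at hf
    obtain ⟨a, ha, b, hb, rfl⟩ := Submodule.mem_sup.1 hf
    obtain ⟨g, hg, rfl⟩ := mem_mulH.1 hb
    refine ⟨g, hg, ?_⟩
    rw [map_add, (hq0 a (h.le ha)).2 ha, zero_add]
  have hsup' : Hm K s (n + 1) ≤ B ⊔ mulH L n := by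
    apply Hm_succ_le
    intro i f hf
    rw [← hsup] at hf
    exact (h.sup hL).mul i f hf
  have hbij : Function.Bijective NL := by
    constructor
    · rw [← LinearMap.ker_eq_bot, LinearMap.ker_eq_bot']
      intro x hx
      obtain ⟨f, hf, rfl⟩ := hqs x
      rw [hNL f hf, hq0' _ (mul_mem_one hL hf)] at hx
      rw [hq0 f hf, ← hcol]
      exact mem_col.2 ⟨hf, hx⟩
    · intro y
      obtain ⟨f, hf, rfl⟩ := hqs' y
      obtain ⟨a, ha, b, hb, rfl⟩ := Submodule.mem_sup.1 (hsup' hf)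
      obtain ⟨g, hg, rfl⟩ := mem_mulH.1 hb
      refine ⟨q g, ?_⟩
      rw [hNL g hg, map_add, (hq0' a (h.le' ha)).2 ha, zero_add]
  let e := LinearEquiv.ofBijective NL hbij
  have he : ∀ f ∈ Hm K s n, e.symm (q' (L * f)) = q f := by
    intro f hf
    rw [LinearEquiv.symm_apply_eq]
    exact (hNL f hf).symm
  let φ : Fin s → Module.End K (Hm K s n ⧸ A') := fun i => e.symm.toLinearMap ∘ₗ N i
  have hφ : ∀ i, ∀ g ∈ Hm K s m, φ i (q (L * g)) = q (X i * g) := by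
    intro i g hg
    simp only [φ, LinearMap.comp_apply, LinearEquiv.coe_coe]
    rw [hN' i _ (mul_mem_one hL hg), mul_left_comm, he _ (mul_mem_one (X_mem i) hg)]
  have hφ' : ∀ i, ∀ f ∈ Hm K s n, φ i (q f) = e.symm (q' (X i * f)) := by
    intro i f hf
    simp only [φ, LinearMap.comp_apply, LinearEquiv.coe_coe]
    rw [hN' i f hf]
  have hcomm : ∀ i j, φ i * φ j = φ j * φ i := by
    intro i j
    apply LinearMap.ext
    intro x
    obtain ⟨g, hg, rfl⟩ := hqL x
    simp only [Module.End.mul_apply]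
    rw [hφ _ g hg, hφ _ g hg, hφ' _ _ (mul_mem_one (X_mem _) hg), hφ' _ _ (mul_mem_one (X_mem _) hg), mul_left_comm]
  obtain ⟨Φ, hΦ⟩ := exists_aeval_end φ hcomm
  have hLp : ∀ k, L ^ k ∈ Hm K s k := fun k => by
    have := IsHomogeneous.pow hL k
    rwa [one_mul] at this
  have c1 : ∀ k, k ≤ n → ∀ g ∈ Hm K s k, Φ g (q (L ^ n)) = q (g * L ^ (n - k)) := by
    intro k
    induction k with
    | zero =>
      intro _ g hg
      rw [mem_homogeneousSubmodule, ← totalDegree_zero_iff_isHomogeneous, totalDegree_eq_zero_iff_eq_C] at hg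
      rw [hg, ← algebraMap_eq, AlgHom.commutes, Module.algebraMap_end_apply, ← map_smul,
        algebraMap_eq, C_mul', Nat.sub_zero]
    | succ k ih =>
      intro hk g hg
      have : Hm K s (k + 1) ≤ LinearMap.eqLocus ((LinearMap.applyₗ (q (L ^ n))) ∘ₗ Φ.toLinearMap)
          (q ∘ₗ LinearMap.mulRight K (L ^ (n - (k + 1)))) := by
        apply Hm_succ_le
        intro i f hf
        rw [LinearMap.mem_eqLocus]
        simp only [LinearMap.comp_apply, LinearMap.applyₗ_apply_apply, AlgHom.toLinearMap_apply,
          LinearMap.mulRight_apply, map_mul, hΦ, Module.End.mul_apply]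
        rw [ih (by omega) f hf, show n - k = (n - (k + 1)) + 1 by omega, pow_succ', mul_left_comm, hφ, mul_assoc]
        have := IsHomogeneous.mul hf (hLp (n - (k + 1)))
        rwa [show k + (n - (k + 1)) = m by omega] at this
      exact this hg
  have c1n : ∀ f ∈ Hm K s n, Φ f (q (L ^ n)) = q f := fun f hf => by
    rw [c1 n le_rfl f hf, Nat.sub_self, pow_zero, mul_one]
  have c2 : ∀ b ∈ Hm K s (n + 1), Φ b (q (L ^ n)) = e.symm (q' b) := by
    intro b hb
    have : Hm K s (n + 1) ≤ LinearMap.eqLocus ((LinearMap.applyₗ (q (L ^ n))) ∘ₗ Φ.toLinearMap)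
          (e.symm.toLinearMap ∘ₗ q') := by
      apply Hm_succ_le
      intro i f hf
      rw [LinearMap.mem_eqLocus]
      simp only [LinearMap.comp_apply, LinearMap.applyₗ_apply_apply, AlgHom.toLinearMap_apply,
        map_mul, hΦ, Module.End.mul_apply]
      rw [c1n f hf, hφ' i f hf]
      rfl
    exact this hb
  have hB : ∀ b ∈ B, Φ b = 0 := by
    intro b hb
    apply LinearMap.ext
    intro x
    obtain ⟨f, hf, rfl⟩ := hqs x
    rw [← c1n f hf, ← Module.End.mul_apply, ← map_mul, mul_comm, map_mul, Module.End.mul_apply,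
      c2 b (h.le' hb), (hq0' b (h.le' hb)).2 hb]
    simp
  have hL1 : Φ (L - 1) = 0 := by
    rw [map_sub, map_one, sub_eq_zero]
    apply LinearMap.ext
    intro x
    obtain ⟨f, hf, rfl⟩ := hqs x
    have := c2 (L * f) (mul_mem_one hL hf)
    rw [map_mul, Module.End.mul_apply, c1n f hf, he f hf] at this
    rw [this]; rfl
  have hne : RingHom.ker Φ ≠ ⊤ := by
    intro ht
    have h1 : (1 : MvPolynomial (Fin s) K) ∈ RingHom.ker Φ := by rw [ht]; trivial
    rw [RingHom.mem_ker, map_one] at h1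
    have : A = Hm K s n := by
      refine le_antisymm h.le fun f hf => ?_
      rw [← hq0 f hf, ← Module.End.one_apply (R := K) (q f), h1]
      rfl
    rw [this, cod_Hm] at hA
    omega
  obtain ⟨M, hM, hle⟩ := Ideal.exists_le_maximal _ hne
  obtain ⟨a, rfl⟩ := isMaximal_iff_eq_vanishingIdeal_singleton.1 hM
  have hz : ∀ f, Φ f = 0 → eval a f = 0 := by
    intro f hf
    have := hle hf
    rw [mem_vanishingIdeal_singleton_iff] at this
    simpa [MvPolynomial.aeval_eq_eval] using this
  have hLa : eval a L = 1 := by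
    have := hz _ hL1
    rw [map_sub, map_one, sub_eq_zero] at this
    exact this
  refine ⟨a, ?_, fun f hf => ?_, fun f hf => hz f (hB f hf)⟩
  · rintro rfl
    have := le_mId hL
    rw [mId, RingHom.mem_ker, hLa] at this
    exact one_ne_zero this
  · have := hz _ (hB _ (h.mul_one hL hf))
    rwa [map_mul, hLa, one_mul] at this

end part5

section part6
variable {K : Type*} [Field K] {s : ℕ}

lemma pos_of_cod {n : ℕ} {W : Submodule K (MvPolynomial (Fin s) K)} (hW : W ≤ Hm K s (n + 1))
    (h : 1 ≤ cod (n + 1) W) : 0 < s := by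
  rcases Nat.eq_zero_or_pos s with rfl | hs
  · rw [cod_s_zero _ hW] at h; omega
  · exact hs

theorem thmG [IsAlgClosed K] {m : ℕ} (c : ℕ) : ∀ (d : ℕ) {A B : Submodule K (MvPolynomial (Fin s) K)},
    Pr (m + 1) A B → cod (m + 1) A = c → Nat.choose (m + 1 + d) (m + 1) ≤ c →
    macaulayUp (m + 1) c ≤ cod (m + 2) B → Ch (A : Set (MvPolynomial (Fin s) K)) (d + 1) := by
  have : Infinite K := IsAlgClosed.instInfinite
  induction c using Nat.strong_induction_on with
  | _ c ih =>
  intro d A B h hc hd hB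
  have hc1 : 1 ≤ c := le_trans (Nat.choose_pos (by omega)) hd
  have hs := pos_of_cod h.le (hc ▸ hc1)
  obtain ⟨v, ⟨h1, h2⟩, h3⟩ := (((green m A h.le).and (Gen.lin_ne' 0 hs)).and (Ch.drop (m := m) (W := A))).exists
  rw [hc] at h1
  have i1 : cod (m + 2) B ≤ cod (m + 2) (B ⊔ mulH (lin v) (m + 1)) + cod (m + 1) A := h.ineq (lin_mem v) h2
  have i2 := macaulay _ (h.sup (lin_mem v)) rfl
  have i3 := up_eq m c
  have i4 : dn (m + 1) c ≤ cod (m + 1) (A ⊔ mulH (lin v) m) := by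
    rw [← (up_strictMono m).le_iff_le]
    omega
  have i5 := le_antisymm h1 i4
  rcases Nat.eq_zero_or_pos (dn (m + 1) c) with h0 | h0
  · obtain rfl : d = 0 := by
      cases d with
      | zero => rfl
      | succ d =>
        have := dn_choose_MG_le hd
        have := Nat.choose_pos (show m + 1 ≤ m + 1 + d by omega)
        omega
    have hz := cod_zero (h.sup (lin_mem v)).le (i5.trans h0)
    have hz' := (h.sup (lin_mem v)).zero (i5.trans h0)
    have hcol := h.eq_col (lin_mem v) h2 (by
      rw [hz', hc, zero_add]
      change c ≤ cod (m + 2) B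
      omega)
    obtain ⟨a, ha, hA, _⟩ := lemmaP h (lin_mem v) hz hcol (by omega)
    exact Ch.point h.le ha hA
  · have key : ∀ e, Nat.choose (m + 1 + e) (m + 1) ≤ dn (m + 1) c → Ch (A : Set (MvPolynomial (Fin s) K)) (e + 2) := by
      intro e he
      apply h3
      exact ih _ (dn_lt hc1) e (h.sup (lin_mem v)) i5 he (by omega)
    cases d with
    | zero => exact (key 0 (by rw [add_zero, Nat.choose_self]; exact h0)).pred
    | succ d => exact key d (dn_choose_MG_le hd)

lemma ext_finset {V : Type*} [AddCommGroup V] [Module K V] {A : Submodule K V} [FiniteDimensional K A] (j : ℕ) :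
    ∀ {E : Submodule K V}, E ≤ A → Module.finrank K A ≤ Module.finrank K E + j →
    ∃ S : Finset V, S.card ≤ j ∧ (∀ f ∈ S, f ∈ A) ∧ A ≤ E ⊔ Submodule.span K (S : Set V) := by
  classical
  induction j with
  | zero =>
    intro E hE h
    refine ⟨∅, by simp, by simp, ?_⟩
    rw [Submodule.eq_of_le_of_finrank_le hE (by simpa using h)]
    exact le_sup_left
  | succ j ih =>
    intro E hE h
    by_cases hA : A ≤ E
    · exact ⟨∅, by simp, by simp, hA.trans le_sup_left⟩
    obtain ⟨g, hg, hgE⟩ := SetLike.not_le_iff_exists.1 hA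
    have hE' : E ⊔ Submodule.span K {g} ≤ A := sup_le hE (by simpa using hg)
    have := Submodule.finiteDimensional_of_le hE'
    have hlt : E < E ⊔ Submodule.span K {g} :=
      lt_of_le_of_ne le_sup_left fun h => hgE (h ▸ Submodule.mem_sup_right (Submodule.mem_span_singleton_self g))
    have := Submodule.finrank_lt_finrank_of_lt hlt
    obtain ⟨S, h1, h2, h3⟩ := ih hE' (by omega)
    refine ⟨insert g S, (Finset.card_insert_le _ _).trans (by omega), ?_, ?_⟩
    · intro f hf
      rcases Finset.mem_insert.1 hf with rfl | hf
      · exact hg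
      · exact h2 f hf
    · rw [Finset.coe_insert, Submodule.span_insert, ← sup_assoc]
      exact h3

/-- R_1 W -/
noncomputable def up1 (W : Submodule K (MvPolynomial (Fin s) K)) : Submodule K (MvPolynomial (Fin s) K) :=
  ⨆ i, W.map (LinearMap.mulLeft K (X i))

lemma up1_le {W V : Submodule K (MvPolynomial (Fin s) K)} (h : ∀ i, ∀ f ∈ W, X i * f ∈ V) : up1 W ≤ V := by
  refine iSup_le fun i => ?_
  rintro _ ⟨f, hf, rfl⟩
  exact h i f hf

lemma up1_pr {n : ℕ} {W : Submodule K (MvPolynomial (Fin s) K)} (hW : W ≤ Hm K s n) : Pr n W (up1 W) where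
  le := hW
  le' := up1_le fun i f hf => mul_mem_one (X_mem i) (hW hf)
  mul := fun i f hf => (le_iSup (fun i => W.map (LinearMap.mulLeft K (X i))) i) ⟨f, hf, rfl⟩

lemma up1_ideal {W : Submodule K (MvPolynomial (Fin s) K)} {P : Ideal (MvPolynomial (Fin s) K)}
    (h : (W : Set (MvPolynomial (Fin s) K)) ⊆ P) : ((up1 W : Submodule K _) : Set (MvPolynomial (Fin s) K)) ⊆ P :=
  up1_le (V := P.restrictScalars K) fun i f hf => P.mul_mem_left _ (h hf)

lemma finrank_H1 : Module.finrank K (Hm K s 1) ≤ s := by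
  rw [Hm, homogeneousSubmodule_one_eq_span_X]
  have := finrank_range_le_card (R := K) (fun i : Fin s => (X i : MvPolynomial (Fin s) K))
  rw [Fintype.card_fin] at this
  exact this

/-- critical case -/
lemma crit [IsAlgClosed K] {m p : ℕ}
    (IHA : ∀ k, k + 1 = m → ∀ {A B : Submodule K (MvPolynomial (Fin s) K)},
      Pr (k + 1) A B → Nat.choose (k + 1 + 1) (k + 1) ≤ cod (k + 1) A →
      macaulayUp (k + 1) (cod (k + 1) A) ≤ cod (k + 2) B + 1 → Ch (A : Set (MvPolynomial (Fin s) K)) 1)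
    {A B : Submodule K (MvPolynomial (Fin s) K)} (h : Pr (m + 1) A B)
    {L : MvPolynomial (Fin s) K} (hL : L ∈ Hm K s 1) (hL0 : L ≠ 0) (hcol : col (m + 1) L B = A)
    (hp : cod (m + 1) (A ⊔ mulH L m) = p) (hdn : dn (m + 1) (cod (m + 1) A) = p)
    (hp1 : 1 ≤ p) (hpm : p ≤ m + 1) : Ch (A : Set (MvPolynomial (Fin s) K)) 1 := by
  classical
  have : Infinite K := IsAlgClosed.instInfinite
  let Y : ℕ → Submodule K (MvPolynomial (Fin s) K) := fun i => col i (L ^ (m + 1 - i)) A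
  have hYle : ∀ i, Y i ≤ Hm K s i := fun i => col_le
  have hYn : Y (m + 1) = A := by
    ext f
    simp only [Y, mem_col, Nat.sub_self, pow_zero, one_mul]
    exact ⟨fun h => h.2, fun hf => ⟨h.le hf, hf⟩⟩
  have hYcol : ∀ i, i ≤ m → Y i = col i L (Y (i + 1)) := by
    intro i hi
    ext f
    simp only [Y, mem_col]
    rw [show m + 1 - i = (m + 1 - (i + 1)) + 1 by omega, pow_succ, mul_assoc]
    exact ⟨fun h => ⟨h.1, mul_mem_one hL h.1, h.2⟩, fun h => ⟨h.1, h.2.2⟩⟩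
  have hYpr : ∀ i, i ≤ m → Pr i (Y i) (Y (i + 1)) := by
    intro i hi
    refine ⟨hYle i, hYle _, fun j f hf => ?_⟩
    simp only [Y, mem_col] at hf ⊢
    refine ⟨mul_mem_one (X_mem j) hf.1, ?_⟩
    rw [← hcol, mem_col]
    constructor
    · have := IsHomogeneous.mul (IsHomogeneous.pow hL (m + 1 - (i + 1))) (mul_mem_one (X_mem j) hf.1)
      rwa [one_mul, show m + 1 - (i + 1) + (i + 1) = m + 1 by omega] at this
    · have := h.mul j _ hf.2
      rw [show m + 1 - i = (m + 1 - (i + 1)) + 1 by omega] at this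
      convert this using 1
      ring
  let X' : ℕ → Submodule K (MvPolynomial (Fin s) K) := fun i =>
    match i with
    | 0 => Y 0
    | i + 1 => Y (i + 1) ⊔ mulH L i
  have hX's : ∀ i, X' (i + 1) = Y (i + 1) ⊔ mulH L i := fun i => rfl
  have hXpr : ∀ i, i ≤ m → Pr i (X' i) (X' (i + 1)) := by
    intro i hi
    cases i with
    | zero =>
      refine ⟨hYle 0, sup_le (hYle 1) (mulH_le hL 0), fun j f hf => ?_⟩
      exact Submodule.mem_sup_left ((hYpr 0 hi).mul j f hf)
    | succ i => exact (hYpr (i + 1) hi).sup hL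
  let t : ℕ → ℕ := fun i => cod i (X' i)
  have hysum : ∀ i, i ≤ m + 1 → cod i (Y i) = ∑ j ∈ Finset.range (i + 1), t j := by
    intro i
    induction i with
    | zero => intro _; simp [t, X']
    | succ i ih =>
      intro hi
      rw [Finset.sum_range_succ, ← ih (by omega), K1 hL hL0 (hYle (i + 1)), ← hYcol i (by omega), add_comm]
  have htn : t (m + 1) = p := by
    simp only [t, hX's, hYn, hp]
  have hc : cod (m + 1) A = cod m (Y m) + p := by
    rw [← htn, ← hYn, hysum (m + 1) le_rfl, Finset.sum_range_succ, hysum m (by omega)]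
  have hmono : ∀ i, i ≤ m → t i ≤ i → t (i + 1) ≤ t i := by
    intro i hi hti
    cases i with
    | zero =>
      have h0 : t 0 = 0 := by omega
      have := (hXpr 0 hi).zero h0
      change t (0 + 1) = 0 at this
      rw [this]; exact Nat.zero_le _
    | succ i =>
      have := macaulay _ (hXpr (i + 1) hi) rfl
      change t (i + 2) ≤ macaulayUp (i + 1) (t (i + 1)) at this
      rwa [up_small hti] at this
  by_cases hcase : ∃ i, i ≤ m ∧ t i < min (i + 1) (p + 1)
  · -- Case A
    obtain ⟨i, him, hti⟩ := hcase
    have hdec : ∀ j, i ≤ j → j ≤ m + 1 → t j ≤ t i := by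
      intro j hij
      induction j, hij using Nat.le_induction with
      | base => intro _; exact le_rfl
      | succ j hj ih =>
        intro hjm
        have h1 := ih (by omega)
        have := hmono j (by omega) (by omega)
        omega
    have h1 := hdec m him (by omega)
    have h2 := hdec (m + 1) (by omega) le_rfl
    have h3 := hmono m le_rfl (by omega)
    have htm : t m = p := by omega
    obtain ⟨k, rfl⟩ : ∃ k, m = k + 1 := ⟨m - 1, by omega⟩
    have hpr := hXpr (k + 1) le_rfl
    have hs := pos_of_cod hpr.le (by change 1 ≤ t (k + 1); omega)
    obtain ⟨v, g1, g2⟩ := ((green k _ hpr.le).and (Gen.lin_ne' 0 hs)).exists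
    change _ ≤ dn (k + 1) (t (k + 1)) at g1
    rw [dn_small (by omega), Nat.le_zero] at g1
    have hz := cod_zero (hpr.sup (lin_mem v)).le g1
    have hz' := (hpr.sup (lin_mem v)).zero g1
    have hcol' := hpr.eq_col (lin_mem v) g2 (by
      rw [hz', zero_add]
      change t (k + 1) ≤ t (k + 1 + 1)
      omega)
    obtain ⟨a, ha, _, hA⟩ := lemmaP hpr (lin_mem v) hz hcol' (by change 1 ≤ t (k + 1); omega)
    refine Ch.point h.le ha fun f hf => hA f ?_
    rw [hX's, hYn]
    exact Submodule.mem_sup_left hf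
  · -- Case B
    push Not at hcase
    have hyge : stair m (p + 1) ≤ cod m (Y m) := by
      rw [hysum m (by omega)]
      exact Finset.sum_le_sum fun i hi => hcase i (by simp at hi; omega)
    have hstair : stair (m + 1) (p + 1) = stair m (p + 1) + (p + 1) := by
      unfold stair
      rw [Finset.sum_range_succ]
      congr 1
      omega
    have hclt : cod (m + 1) A < stair (m + 1) (p + 1) := by
      by_contra hge
      push Not at hge
      have := dn_mono (m + 1) hge
      rw [dn_stair _ _ (by omega)] at this
      omega
    have hym : cod m (Y m) = stair m (p + 1) := by omega
    by_cases hpm' : p + 1 ≤ m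
    · obtain ⟨k, rfl⟩ : ∃ k, m = k + 1 := ⟨m - 1, by omega⟩
      have hd := dn_stair (k + 1) (p + 1) (by omega)
      rw [← hym] at hd
      have hup : macaulayUp (k + 1) (cod (k + 1) (Y (k + 1))) = cod (k + 2) A + 1 := by
        rw [up_eq, hd, up_small hpm', hc]; ring
      have hyk : Nat.choose (k + 1 + 1) (k + 1) ≤ cod (k + 1) (Y (k + 1)) := by
        by_contra hlt
        have : Nat.choose (k + 1 + 1) (k + 1) = k + 2 := by simp
        rw [dn_small (by omega)] at hd
        omega
      have hpr1 := up1_pr (hYle (k + 1))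
      have hEA : up1 (Y (k + 1)) ≤ A := by
        have := up1_le (hYpr (k + 1) le_rfl).mul
        rwa [hYn] at this
      have e1 : cod (k + 2) (up1 (Y (k + 1))) ≤ cod (k + 2) A + 1 := hup ▸ macaulay _ hpr1 rfl
      by_cases e2 : cod (k + 2) (up1 (Y (k + 1))) ≤ cod (k + 2) A
      · have e3 := cod_eq hEA h.le e2
        have := IHA k rfl (hYn ▸ hYpr (k + 1) le_rfl) hyk hup.le
        refine this.mono fun P _ hP => ?_
        rw [← e3]
        exact up1_ideal hP
      · have g := thmG _ 1 hpr1 rfl hyk (by omega)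
        have := fd_le h.le
        have f1 := cod_add h.le
        have f2 := cod_add hpr1.le'
        obtain ⟨S, s1, s2, s3⟩ := ext_finset 1 hEA (by
          change cod (k + 2) A + _ = Module.finrank K (Hm K s (k + 2)) at f1
          change cod (k + 2) _ + _ = Module.finrank K (Hm K s (k + 2)) at f2
          omega)
        refine (g.krull S s1 (fun f hf => le_mId (h.le (s2 f hf)))).mono fun P _ hP => ?_
        have hP' := Set.union_subset_iff.1 hP
        have : A ≤ P.restrictScalars K := s3.trans (sup_le (up1_ideal hP'.1) (Submodule.span_le.2 hP'.2))
        exact this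
    · have hst : stair m (p + 1) = Nat.choose (m + 2) m := by
        rw [← stair_top]
        exact Finset.sum_congr rfl fun i hi => by simp at hi; omega
      have hfin : ∀ S : Finset (MvPolynomial (Fin s) K), S.card + 1 ≤ s → (∀ f ∈ S, f ∈ mId K s) →
          (∀ P : Ideal (MvPolynomial (Fin s) K), (∀ f ∈ S, f ∈ P) → A ≤ P.restrictScalars K) →
          Ch (A : Set (MvPolynomial (Fin s) K)) 1 := by
        intro S h1 h2 h3
        have hb := Ch.bot (K := K) (s := s)
        rw [show s = (s - 1) + 1 by omega] at hb
        obtain ⟨q, rfl⟩ : ∃ q, s = q + 1 := ⟨s - 1, by omega⟩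
        have hb := Ch.bot (K := K) (s := q + 1)
        refine (hb.krull S (by omega) h2).mono fun P _ hP => ?_
        exact h3 P fun f hf => hP (Or.inr hf)
      have hH1 := finrank_H1 (K := K) (s := s)
      rcases Nat.eq_zero_or_pos m with rfl | hm
      · have hp1' : p = 1 := by omega
        subst hp1'
        simp only [zero_add] at *
        have := fd_le h.le
        have f1 := cod_add h.le
        rw [Nat.choose_zero_right] at hst
        obtain ⟨S, s1, s2, s3⟩ := ext_finset (A := A) (Module.finrank K A) bot_le (by omega)
        refine hfin S (by omega) (fun f hf => le_mId (h.le (s2 f hf))) fun P hP => ?_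
        refine s3.trans (sup_le bot_le (Submodule.span_le.2 hP))
      · have hteq : ∀ i ∈ Finset.range (m + 1), min (i + 1) (p + 1) = t i := by
          refine (Finset.sum_eq_sum_iff_of_le fun i hi => hcase i (by simp at hi; omega)).1 ?_
          rw [← hysum m (by omega), hym]; rfl
        have hy1 : cod 1 (Y 1) = 3 := by
          rw [hysum 1 (by omega), Finset.sum_range_succ, Finset.sum_range_succ, Finset.sum_range_zero,
            ← hteq 0 (by simp), ← hteq 1 (by simp; omega)]
          omega
        let E : ℕ → Submodule K (MvPolynomial (Fin s) K) := fun j => Nat.rec (Y 1) (fun _ V => up1 V) j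
        have hEs : ∀ j, E (j + 1) = up1 (E j) := fun j => rfl
        have hEle : ∀ j, E j ≤ Hm K s (j + 1) := by
          intro j
          induction j with
          | zero => exact hYle 1
          | succ j ih => rw [hEs]; exact (up1_pr ih).le'
        have hEY : ∀ j, j ≤ m → E j ≤ Y (j + 1) := by
          intro j
          induction j with
          | zero => intro _; exact le_rfl
          | succ j ih =>
            intro hj
            rw [hEs]
            exact up1_le fun i f hf => (hYpr (j + 1) hj).mul i f (ih (by omega) hf)
        have hEc : ∀ j, cod (j + 1) (E j) ≤ Nat.choose (j + 3) (j + 1) := by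
          intro j
          induction j with
          | zero =>
            change cod 1 (Y 1) ≤ _
            rw [hy1]; decide
          | succ j ih =>
            rw [hEs]
            refine (macaulay _ (up1_pr (hEle j)) rfl).trans ?_
            refine ((up_strictMono j).monotone ih).trans ?_
            rw [up_choose]
        have hEI : ∀ P : Ideal (MvPolynomial (Fin s) K), Y 1 ≤ P.restrictScalars K → ∀ j, E j ≤ P.restrictScalars K := by
          intro P hP j
          induction j with
          | zero => exact hP
          | succ j ih => rw [hEs]; exact up1_ideal ih
        have hEA : E m ≤ A := hYn ▸ hEY m le_rfl
        have := fd_le h.le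
        have := fd_le (hYle 1)
        have f1 := cod_add h.le
        have f2 := cod_add (hEle m)
        have f3 := cod_add (hYle 1)
        have f4 := hEc m
        have f5 : Nat.choose (m + 3) (m + 1) = Nat.choose (m + 2) m + (m + 2) := by
          rw [Nat.choose_succ_succ (m + 2)]
          simp
        obtain ⟨S, s1, s2, s3⟩ := ext_finset 2 hEA (by omega)
        obtain ⟨S', s1', s2', s3'⟩ := ext_finset (A := Y 1) (Module.finrank K (Y 1)) bot_le (by omega)
        refine hfin (S ∪ S') ?_ ?_ fun P hP => ?_
        · have := Finset.card_union_le S S'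
          omega
        · intro f hf
          rcases Finset.mem_union.1 hf with hf | hf
          · exact le_mId (h.le (s2 f hf))
          · exact le_mId (hYle 1 (s2' f hf))
        · refine s3.trans (sup_le (hEI P ?_ m) (Submodule.span_le.2 fun f hf => hP f (Finset.mem_union_left _ hf)))
          exact s3'.trans (sup_le bot_le (Submodule.span_le.2 fun f hf => hP f (Finset.mem_union_right _ hf)))

end part6

section part7
variable {K : Type*} [Field K] {s : ℕ}

theorem thmA [IsAlgClosed K] (m : ℕ) : ∀ (c d : ℕ) {A B : Submodule K (MvPolynomial (Fin s) K)},
    Pr (m + 1) A B → cod (m + 1) A = c → Nat.choose (m + 1 + (d + 1)) (m + 1) ≤ c →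
    macaulayUp (m + 1) c ≤ cod (m + 2) B + 1 → Ch (A : Set (MvPolynomial (Fin s) K)) (d + 1) := by
  have : Infinite K := IsAlgClosed.instInfinite
  induction m using Nat.strong_induction_on with
  | _ m IHm =>
  intro c
  induction c using Nat.strong_induction_on with
  | _ c ih =>
  intro d A B h hc hd hB
  have hc1 : 1 ≤ c := le_trans (Nat.choose_pos (by omega)) hd
  have hs := pos_of_cod h.le (hc ▸ hc1)
  obtain ⟨v, ⟨h1, h2⟩, h3⟩ := (((green m A h.le).and (Gen.lin_ne' 0 hs)).and (Ch.drop (m := m) (W := A))).exists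
  rw [hc] at h1
  have i1 : cod (m + 2) B ≤ cod (m + 2) (B ⊔ mulH (lin v) (m + 1)) + cod (m + 1) A := h.ineq (lin_mem v) h2
  have hpr := h.sup (lin_mem v)
  have i2 := macaulay _ hpr rfl
  have i3 := up_eq m c
  have hdp := dn_choose_MG_le hd
  have hp1 : 1 ≤ dn (m + 1) c := le_trans (Nat.choose_pos (by omega)) hdp
  rcases h1.lt_or_eq with hlt | heq
  · have j1 := up_strictMono m hlt
    have j2 : cod (m + 1) (A ⊔ mulH (lin v) m) + 1 = dn (m + 1) c := by
      by_contra hne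
      have k1 : cod (m + 1) (A ⊔ mulH (lin v) m) < dn (m + 1) c - 1 := by omega
      have k2 := up_strictMono m k1
      have k3 := up_strictMono m (show dn (m + 1) c - 1 < dn (m + 1) c by omega)
      omega
    have j3 : macaulayUp (m + 1) (cod (m + 1) (A ⊔ mulH (lin v) m)) ≤ cod (m + 2) (B ⊔ mulH (lin v) (m + 1)) := by
      omega
    cases d with
    | succ e =>
      refine h3 e (thmG _ e hpr rfl ?_ j3)
      have : Nat.choose (m + 1 + e) (m + 1) < Nat.choose (m + 1 + (e + 1)) (m + 1) := by
        rw [← add_assoc, Nat.choose_succ_succ' (m + 1 + e) m]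
        have := Nat.choose_pos (show m ≤ m + 1 + e by omega)
        omega
      omega
    | zero =>
      rcases Nat.eq_zero_or_pos (cod (m + 1) (A ⊔ mulH (lin v) m)) with h0 | h0
      · have hz := cod_zero hpr.le h0
        have hz' := hpr.zero h0
        have hp : dn (m + 1) c = 1 := by omega
        have hup : macaulayUp (m + 1) 1 = 1 := up_small (by omega)
        rw [hp, hup] at i3
        have hcol := h.eq_col (lin_mem v) h2 (by
          rw [hz', hc, zero_add]
          change c ≤ cod (m + 2) B
          omega)
        obtain ⟨a, ha, hA, _⟩ := lemmaP h (lin_mem v) hz hcol (by omega)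
        exact Ch.point h.le ha hA
      · exact (h3 0 (thmG _ 0 hpr rfl (by rw [add_zero, Nat.choose_self]; exact h0) j3)).pred
  · cases d with
    | succ e => exact h3 e (ih _ (dn_lt hc1) e hpr heq hdp (by omega))
    | zero =>
      by_cases hb : macaulayUp (m + 1) (dn (m + 1) c) ≤ cod (m + 2) (B ⊔ mulH (lin v) (m + 1))
      · exact (h3 0 (thmG _ 0 hpr heq (by rw [add_zero, Nat.choose_self]; exact hp1) hb)).pred
      · by_cases hpm : m + 2 ≤ dn (m + 1) c
        · refine (h3 0 (ih _ (dn_lt hc1) 0 hpr heq ?_ (by omega))).pred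
          rw [zero_add, Nat.choose_succ_self_right]
          exact hpm
        · have hup : macaulayUp (m + 1) (dn (m + 1) c) = dn (m + 1) c := up_small (by omega)
          have hcol := h.eq_col (lin_mem v) h2 (by
            rw [hc]
            change cod (m + 2) (B ⊔ mulH (lin v) (m + 1)) + c ≤ cod (m + 2) B
            omega)
          refine crit ?_ h (lin_mem v) h2 hcol heq (by rw [hc]) hp1 (by omega)
          intro k hk A' B' hpr' hcod hup'
          exact IHm k (by omega) _ 0 hpr' rfl hcod hup'

end part7

section part8
variable {K : Type*} [Field K] {s : ℕ}

lemma krull_le_of_finite {R S : Type*} [CommRing R] [CommRing S] [Algebra R S] [Module.Finite R S] :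
    ringKrullDim S ≤ ringKrullDim R := by
  have : Algebra.IsIntegral R S := Algebra.IsIntegral.of_finite R S
  refine Order.krullDim_le_of_strictMono (PrimeSpectrum.comap (algebraMap R S)) fun p q h => ?_
  exact Ideal.IsIntegral.comap_lt_comap (R := R) (I := p.asIdeal) (J := q.asIdeal) h

lemma lemmaF_aux {m k : ℕ} {W : Submodule K (MvPolynomial (Fin s) K)} (v : Fin k → Fin s → K)
    (h : Hm K s (m + 1) ≤ W ⊔ ⨆ i, mulH (lin (v i)) m)
    {Q : Type*} [CommRing Q] [Algebra K Q] (π : MvPolynomial (Fin s) K →ₐ[K] Q)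
    (hπ : Function.Surjective π) (hW : ∀ f ∈ W, π f = 0) :
    ringKrullDim Q ≤ (k : ℕ) := by
  classical
  let b : Ideal (MvPolynomial (Fin s) K) := RingHom.ker π
  let T : ℕ → Submodule K (MvPolynomial (Fin s) K) := fun t => b.restrictScalars K ⊔ ⨆ i, mulH (lin (v i)) t
  have hT : ∀ j, Hm K s (m + j + 1) ≤ T (m + j) := by
    intro j
    induction j with
    | zero => exact h.trans (sup_le_sup_right (fun f hf => hW f hf) _)
    | succ j ih =>
      refine Hm_succ_le fun i f hf => ?_
      have : T (m + j) ≤ (T (m + (j + 1))).comap (LinearMap.mulLeft K (X i)) := by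
        refine sup_le (fun f hf => ?_) (iSup_le fun e => ?_)
        · exact Submodule.mem_sup_left (b.mul_mem_left _ hf)
        · intro f hf
          obtain ⟨g, hg, rfl⟩ := mem_mulH.1 hf
          refine Submodule.mem_sup_right (Submodule.mem_iSup_of_mem e (mem_mulH.2 ⟨X i * g, mul_mem_one (X_mem i) hg, ?_⟩))
          simp only [LinearMap.mulLeft_apply]
          ring
      exact this (ih hf)
  let φ : MvPolynomial (Fin k) K →ₐ[K] Q := aeval fun i => π (lin (v i))
  let _ : Algebra (MvPolynomial (Fin k) K) Q := φ.toRingHom.toAlgebra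
  have : IsScalarTower K (MvPolynomial (Fin k) K) Q :=
    IsScalarTower.of_algebraMap_eq' φ.comp_algebraMap.symm
  choose S hS using fun t => homogeneousSubmodule_fg (R := K) (σ := Fin s) t
  let F : Finset (MvPolynomial (Fin s) K) := (Finset.range (m + 1)).biUnion S
  let N : Submodule (MvPolynomial (Fin k) K) Q :=
    Submodule.span _ ((F.image π : Finset Q) : Set Q)
  let N' : Submodule K (MvPolynomial (Fin s) K) := (N.restrictScalars K).comap π.toLinearMap
  have hN' : ∀ f, f ∈ N' ↔ π f ∈ N := fun f => Iff.rfl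
  have hlow : ∀ t, t ≤ m → Hm K s t ≤ N' := by
    intro t ht
    rw [Hm, ← hS t, Submodule.span_le]
    intro f hf
    refine Submodule.subset_span ?_
    exact Finset.mem_coe.2 (Finset.mem_image_of_mem _ (Finset.mem_biUnion.2 ⟨t, by simp; omega, hf⟩))
  have hall : ∀ j, Hm K s (m + j) ≤ N' := by
    intro j
    induction j with
    | zero => exact hlow m le_rfl
    | succ j ih =>
      refine (hT j).trans (sup_le (fun f hf => ?_) (iSup_le fun e => mulH_mono fun g hg => ?_))
      · rw [hN', show π f = 0 from hf]
        exact N.zero_mem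
      · rw [hN', map_mul]
        have := N.smul_mem (X e) ((hN' g).1 (ih hg))
        rw [Algebra.smul_def] at this
        have h2 : algebraMap (MvPolynomial (Fin k) K) Q (X e) = π (lin (v e)) :=
          aeval_X _ e
        rwa [h2] at this
  have hN : N = ⊤ := by
    rw [eq_top_iff]
    rintro q -
    obtain ⟨f, rfl⟩ := hπ q
    rw [← hN', ← sum_homogeneousComponent f]
    refine Submodule.sum_mem _ fun t _ => ?_
    have hf : homogeneousComponent t f ∈ Hm K s t := homogeneousComponent_isHomogeneous t f
    rcases le_total t m with h1 | h1
    · exact hlow t h1 hf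
    · obtain ⟨j, rfl⟩ := Nat.exists_eq_add_of_le h1
      exact hall j hf
  have : Module.Finite (MvPolynomial (Fin k) K) Q := ⟨hN ▸ ⟨_, rfl⟩⟩
  refine (krull_le_of_finite (R := MvPolynomial (Fin k) K)).trans ?_
  rw [MvPolynomial.ringKrullDim_of_isNoetherianRing, ringKrullDim_eq_zero_of_field, zero_add]
  simp

lemma lemmaF {m k : ℕ} {W : Submodule K (MvPolynomial (Fin s) K)} (v : Fin k → Fin s → K)
    (h : Hm K s (m + 1) ≤ W ⊔ ⨆ i, mulH (lin (v i)) m) :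
    ringKrullDim (MvPolynomial (Fin s) K ⧸ Ideal.span (W : Set (MvPolynomial (Fin s) K))) ≤ (k : ℕ) :=
  lemmaF_aux v h (Ideal.Quotient.mkₐ K _) (Ideal.Quotient.mkₐ_surjective K _)
    fun f hf => Ideal.Quotient.eq_zero_iff_mem.2 (Ideal.subset_span hf)

/-- Iterated Green -/
lemma green_iter [Infinite K] {m : ℕ} (d : ℕ) : ∀ {W : Submodule K (MvPolynomial (Fin s) K)},
    W ≤ Hm K s (m + 1) → cod (m + 1) W < Nat.choose (m + 1 + d) (m + 1) →
    ∃ v : Fin d → Fin s → K, Hm K s (m + 1) ≤ W ⊔ ⨆ i, mulH (lin (v i)) m := by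
  induction d with
  | zero =>
    intro W hW h
    rw [add_zero, Nat.choose_self, Nat.lt_one_iff] at h
    exact ⟨Fin.elim0, (cod_zero hW h) ▸ le_sup_left⟩
  | succ d ih =>
    intro W hW h
    obtain ⟨v, hv⟩ := (green m W hW).exists
    obtain ⟨u, hu⟩ := ih (sup_le hW (mulH_le (lin_mem v) m)) (hv.trans_lt (dn_lt_choose_MG h))
    refine ⟨Fin.cons v u, hu.trans ?_⟩
    refine sup_le (sup_le le_sup_left ?_) (iSup_le fun i => ?_)
    · exact le_sup_of_le_right (le_iSup_of_le 0 (by simp))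
    · exact le_sup_of_le_right (le_iSup_of_le i.succ (by simp))

/-- graded piece -/
noncomputable def gp (I : Ideal (MvPolynomial (Fin s) K)) (t : ℕ) : Submodule K (MvPolynomial (Fin s) K) :=
  I.restrictScalars K ⊓ Hm K s t

lemma hilb_eq (I : Ideal (MvPolynomial (Fin s) K)) (t : ℕ) : hilb I t = cod t (gp I t) := by
  have hle : gp I t ≤ Hm K s t := inf_le_right
  have h1 := cod_add hle
  let g := (Ideal.Quotient.mkₐ K I).toLinearMap.domRestrict (Hm K s t)
  have h2 := LinearMap.finrank_range_add_finrank_ker g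
  have h3 : LinearMap.range g = (Hm K s t).map (Ideal.Quotient.mkₐ K I).toLinearMap := by
    ext x; simp [g]
  have h4 : (LinearMap.ker g).map (Hm K s t).subtype = gp I t := by
    ext x
    simp only [Submodule.mem_map, LinearMap.mem_ker, gp, Submodule.mem_inf, Submodule.restrictScalars_mem]
    constructor
    · rintro ⟨y, hy, rfl⟩
      exact ⟨Ideal.Quotient.eq_zero_iff_mem.1 hy, y.2⟩
    · rintro ⟨h1, h2⟩
      exact ⟨⟨x, h2⟩, Ideal.Quotient.eq_zero_iff_mem.2 h1, rfl⟩
  have h5 : Module.finrank K (LinearMap.ker g) = Module.finrank K (gp I t) := by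
    rw [← h4]
    exact (LinearEquiv.finrank_eq (Submodule.equivMapOfInjective _ (Submodule.subtype_injective _) _))
  rw [h3, h5] at h2
  unfold hilb
  change Module.finrank K ((Hm K s t).map (Ideal.Quotient.mkₐ K I).toLinearMap) = _
  omega

lemma mem_gp_points {Z : Set (Fin s → K)} {t : ℕ} {f : MvPolynomial (Fin s) K} :
    f ∈ gp (pointsIdeal Z) t ↔ f ∈ Hm K s t ∧ ∀ z ∈ Z, eval z f = 0 := by
  simp only [gp, Submodule.mem_inf, Submodule.restrictScalars_mem, pointsIdeal, Submodule.mem_iInf, RingHom.mem_ker]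
  constructor
  · rintro ⟨h1, h2⟩
    exact ⟨h2, fun z hz => by simpa using h1 z hz 1⟩
  · rintro ⟨h1, h2⟩
    exact ⟨fun z hz c => by rw [eval_smul_hom h1, h2 z hz, mul_zero], h1⟩

lemma gp_pr (I : Ideal (MvPolynomial (Fin s) K)) (t : ℕ) : Pr t (gp I t) (gp I (t + 1)) where
  le := inf_le_right
  le' := inf_le_right
  mul := fun i _ hf => ⟨I.mul_mem_left _ hf.1, mul_mem_one (X_mem i) hf.2⟩

lemma hvec_succ {Z : Set (Fin s → K)} {v : Fin s → K} (hv0 : lin v ≠ 0) (hv : ∀ z ∈ Z, eval z (lin v) ≠ 0) (t : ℕ) :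
    hvec (pointsIdeal Z) (t + 1) = cod (t + 1) (gp (pointsIdeal Z) (t + 1) ⊔ mulH (lin v) t) := by
  have hcol : col t (lin v) (gp (pointsIdeal Z) (t + 1)) = gp (pointsIdeal Z) t := by
    ext f
    rw [mem_col, mem_gp_points, mem_gp_points]
    constructor
    · rintro ⟨h1, _, h2⟩
      refine ⟨h1, fun z hz => ?_⟩
      have := h2 z hz
      rw [map_mul] at this
      exact (mul_eq_zero.1 this).resolve_left (hv z hz)
    · rintro ⟨h1, h2⟩
      exact ⟨h1, mul_mem_one (lin_mem v) h1, fun z hz => by rw [map_mul, h2 z hz, mul_zero]⟩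
  change hilb _ _ - hilb _ _ = _
  rw [hilb_eq, hilb_eq, K1 (lin_mem v) hv0 (gp_pr _ t).le', hcol, Nat.add_sub_cancel]

lemma Gen.eval_ne {z : Fin s → K} (hz : z ≠ 0) : Gen fun v => eval z (lin v) ≠ 0 := by
  refine ⟨lin z, fun h => hz (lin_eq_zero h), fun v hv h => hv ?_⟩
  rw [eval_lin] at h ⊢
  rw [← h]
  exact Finset.sum_congr rfl fun i _ => mul_comm _ _

theorem final [IsAlgClosed K] {r : ℕ}
    (Z : Finset (Fin (r + 1) → K))
    (hZ0 : ∀ v ∈ Z, v ≠ (0 : Fin (r + 1) → K))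
    (n : ℕ)
    (hlow : n + 1 ≤ hvec (pointsIdeal (↑Z : Set (Fin (r + 1) → K))) n)
    (hamg : hvec (pointsIdeal (↑Z : Set (Fin (r + 1) → K))) (n + 1) + 1
      = macaulayUp n (hvec (pointsIdeal (↑Z : Set (Fin (r + 1) → K))) n)) :
    ringKrullDim
        (MvPolynomial (Fin (r + 1)) K ⧸ compIdeal (pointsIdeal (↑Z : Set (Fin (r + 1) → K))) n)
      = ((MGdim (hvec (pointsIdeal (↑Z : Set (Fin (r + 1) → K))) n) n + 1 : ℕ) : WithBot ℕ∞) ∨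
    ringKrullDim
        (MvPolynomial (Fin (r + 1)) K ⧸ compIdeal (pointsIdeal (↑Z : Set (Fin (r + 1) → K))) n)
      = ((MGdim (hvec (pointsIdeal (↑Z : Set (Fin (r + 1) → K))) n) n + 2 : ℕ) : WithBot ℕ∞) := by
  have : Infinite K := IsAlgClosed.instInfinite
  cases n with
  | zero => simp [macaulayUp] at hamg
  | succ m =>
  set I := pointsIdeal (↑Z : Set (Fin (r + 1) → K)) with hI
  have hcomp : compIdeal I (m + 1) = Ideal.span (gp I (m + 1) : Set (MvPolynomial (Fin (r + 1)) K)) := rfl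
  obtain ⟨v, ⟨h1, h2⟩, h3⟩ := (((Gen.finset Z fun z hz => Gen.eval_ne (hZ0 z hz)).and
    (Gen.lin_ne' 0 (Nat.succ_pos r))).and (Ch.drop (m := m) (W := gp I (m + 1)))).exists
  have e1 := hvec_succ (Z := (↑Z : Set (Fin (r + 1) → K))) h2 h1 m
  have e2 := hvec_succ (Z := (↑Z : Set (Fin (r + 1) → K))) h2 h1 (m + 1)
  rw [← hI] at e1 e2
  have hpr := (gp_pr I (m + 1)).sup (lin_mem v)
  set c := hvec I (m + 1) with hc
  set D := MGdim c (m + 1) with hD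
  have hD1 : 1 ≤ D := le_MG (by omega) (by rw [Nat.choose_succ_self_right]; omega)
  have hDc : Nat.choose (m + 1 + D) (m + 1) ≤ c := choose_MG_le (by omega) (by omega)
  have hDc' : c < Nat.choose (m + 1 + D + 1) (m + 1) := lt_choose_MG (by omega)
  obtain ⟨e, he⟩ : ∃ e, D = e + 1 := ⟨D - 1, by omega⟩
  rw [hcomp]
  have low : ((D + 1 : ℕ) : WithBot ℕ∞) ≤ ringKrullDim (MvPolynomial (Fin (r + 1)) K ⧸
      Ideal.span (gp I (m + 1) : Set (MvPolynomial (Fin (r + 1)) K))) := by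
    rw [he]
    exact (h3 e (thmA m c e hpr e1.symm (by rw [← he]; exact hDc) (by
      change _ ≤ cod (m + 1 + 1) _ + 1
      omega))).dim
  obtain ⟨u, hu⟩ := green_iter (D + 1) hpr.le (by rw [← e1]; exact hDc')
  have upp := lemmaF (W := gp I (m + 1)) (Fin.cons v u : Fin (D + 2) → _) (hu.trans (by
    refine sup_le (sup_le le_sup_left ?_) (iSup_le fun i => ?_)
    · exact le_sup_of_le_right (le_iSup_of_le 0 (by simp))
    · exact le_sup_of_le_right (le_iSup_of_le i.succ (by simp))))
  generalize ringKrullDim (MvPolynomial (Fin (r + 1)) K ⧸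
      Ideal.span (gp I (m + 1) : Set (MvPolynomial (Fin (r + 1)) K))) = x at low upp ⊢
  cases x with
  | bot => simp at low
  | coe x =>
    cases x with
    | top => exact absurd (WithBot.coe_le_coe.1 upp) (not_le.2 (ENat.coe_lt_top (D + 2)))
    | coe x =>
      have a1 : D + 1 ≤ x := by exact_mod_cast low
      have a2 : x ≤ D + 2 := by exact_mod_cast upp
      rcases (show x = D + 1 ∨ x = D + 2 by omega) with rfl | rfl
      · left; rfl
      · right; rfl

end part8

/-- **Corollary.**  Let `Z ⊂ ℙ^r` be a finite reduced set of points with saturated homogeneous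
ideal `I_Z ⊂ R = K[x_0,…,x_r]`, and let `A = S/J` be the artinian reduction of `R/I_Z` by a
general linear form, whose Hilbert function is the `h`-vector `Δh_Z` of `Z`.  Assume that
`h_A(n) ≥ n + 1` and `h_A(n+1) = h_A(n)^{⟨n⟩} - 1` (almost maximal growth, i.e. the hypotheses
of one of the two base-locus theorems hold).  Then the base locus of `[I_Z]_n` in `ℙ^r` is a
scheme of dimension either `MG(h_A(n),n)` or `MG(h_A(n),n) + 1`; equivalently, the Krull
dimension of `R/⟨[I_Z]_n⟩` is either `MG(h_A(n),n) + 1` or `MG(h_A(n),n) + 2`. -/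
theorem points_almostMaximalGrowth_baseLocus_dim
    {K : Type*} [Field K] [IsAlgClosed K] {r : ℕ}
    (Z : Finset (Fin (r + 1) → K))
    (hZ0 : ∀ v ∈ Z, v ≠ (0 : Fin (r + 1) → K))
    (hZdist : ∀ v ∈ Z, ∀ w ∈ Z, v ≠ w → ∀ c : K, w ≠ c • v)
    (n : ℕ)
    (hlow : n + 1 ≤ hvec (pointsIdeal (↑Z : Set (Fin (r + 1) → K))) n)
    (hamg : hvec (pointsIdeal (↑Z : Set (Fin (r + 1) → K))) (n + 1) + 1
      = macaulayUp n (hvec (pointsIdeal (↑Z : Set (Fin (r + 1) → K))) n)) :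
    ringKrullDim
        (MvPolynomial (Fin (r + 1)) K ⧸ compIdeal (pointsIdeal (↑Z : Set (Fin (r + 1) → K))) n)
      = ((MGdim (hvec (pointsIdeal (↑Z : Set (Fin (r + 1) → K))) n) n + 1 : ℕ) : WithBot ℕ∞) ∨
    ringKrullDim
        (MvPolynomial (Fin (r + 1)) K ⧸ compIdeal (pointsIdeal (↑Z : Set (Fin (r + 1) → K))) n)
      = ((MGdim (hvec (pointsIdeal (↑Z : Set (Fin (r + 1) → K))) n) n + 2 : ℕ) : WithBot ℕ∞) := by
  exact final Z hZ0 n hlow hamg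
end

section
/- Let K be an algebraically closed field, R = K[x_0,…,x_r], Z ⊂ ℙ^r a finite reduced set of points with saturated homogeneous ideal I_Z, and J ⊆ S = R/(L) the artinian reduction by a general linear form L. Assume the h-vector of Z has the form (1, h_1, …, k, k−1, 0), where the value k occurs in degree n with n ≥ k ≥ 2 and 3 ≤ h_1 ≤ r, and the h-vector is 0 in all degrees ≥ n+2. Let W be the base locus of [J]_n in ℙ^{r−1}. Then either W is empty (the linear system |[J]_n| is basepoint free), or W is a zero-dimensional scheme of degree at most k. -/
open MvPolynomial

theorem comb_aux : ∀ (m t : ℕ) (M N : Finset (Fin m → ℕ)), M.card ≤ t →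
    (∀ u ∈ N, ∑ i, u i = t + 1) →
    (∀ u ∈ N, ∀ i, 0 < u i → Function.update u i (u i - 1) ∈ M) → N.card ≤ M.card := by
  intro m
  induction m with
  | zero =>
    intro t M N _ hs _
    have : N = ∅ := by
      apply Finset.eq_empty_of_forall_notMem
      intro u hu
      have := hs u hu
      simp at this
    simp [this]
  | succ m ih =>
    intro t M N hM hs hN
    classical
    let sl : Finset (Fin (m+1) → ℕ) → ℕ → Finset (Fin m → ℕ) := fun A j =>
      (A.filter (fun u => u 0 = j)).image Fin.tail
    have hsl : ∀ A j v, v ∈ sl A j ↔ (Fin.cons j v : Fin (m+1) → ℕ) ∈ A := by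
      intro A j v
      simp only [sl, Finset.mem_image, Finset.mem_filter]
      constructor
      · rintro ⟨u, ⟨hu, rfl⟩, rfl⟩
        rwa [Fin.cons_self_tail]
      · intro h
        exact ⟨_, ⟨h, by simp⟩, by simp⟩
    have hslc : ∀ A j, (sl A j).card = (A.filter (fun u => u 0 = j)).card := by
      intro A j
      apply Finset.card_image_of_injOn
      intro u hu w hw h
      simp only [Finset.coe_filter, Set.mem_ofPred_eq] at hu hw
      rw [← Fin.cons_self_tail u, ← Fin.cons_self_tail w, hu.2, hw.2, h]
    -- restricted counts
    have hcount : ∀ (A : Finset (Fin (m+1) → ℕ)) (R : Finset ℕ),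
        ∑ j ∈ R, (sl A j).card = (A.filter (fun u => u 0 ∈ R)).card := by
      intro A R
      simp_rw [hslc]
      rw [Finset.card_eq_sum_card_fiberwise (f := fun u => u 0) (t := R)]
      · apply Finset.sum_congr rfl
        intro j hj
        congr 1
        ext u
        simp only [Finset.mem_filter]
        constructor
        · rintro ⟨h1, rfl⟩; exact ⟨⟨h1, hj⟩, rfl⟩
        · rintro ⟨⟨h1, _⟩, h2⟩; exact ⟨h1, h2⟩
      · intro u hu
        simp only [Finset.coe_filter, Set.mem_ofPred_eq] at hu
        exact hu.2
    have hle : ∀ R, ∑ j ∈ R, (sl M j).card ≤ M.card := by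
      intro R
      rw [hcount]
      exact Finset.card_filter_le _ _
    have hNtot : N.card = ∑ j ∈ Finset.range (t+2), (sl N j).card := by
      rw [hcount, Finset.filter_true_of_mem]
      intro u hu
      have := hs u hu
      have h2 := Finset.single_le_sum (f := u) (fun i _ => Nat.zero_le _) (Finset.mem_univ 0)
      rw [Finset.mem_range]; omega
    -- exists an empty slice
    have hex : ∃ c, sl M c = ∅ ∧ c ≤ t := by
      by_contra! hcon
      have h1 : ∑ j ∈ Finset.range (t+1), 1 ≤ ∑ j ∈ Finset.range (t+1), (sl M j).card := by
        apply Finset.sum_le_sum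
        intro j hj
        rw [Finset.mem_range] at hj
        rw [Nat.succ_le_iff, Finset.card_pos]
        by_contra hne
        have := hcon j (Finset.not_nonempty_iff_eq_empty.mp hne)
        omega
      have h2 := hle (Finset.range (t+1))
      simp at h1
      omega
    obtain ⟨hc, hct⟩ := Nat.find_spec hex
    have hmin : ∀ j, j < Nat.find hex → sl M j ≠ ∅ := by
      intro j hj h
      exact Nat.find_min hex hj ⟨h, by omega⟩
    generalize Nat.find hex = c at hc hct hmin
    -- slices of N at low levels
    have hstep : ∀ j, j ≤ t → (sl M j).card ≤ t - j → (sl N j).card ≤ (sl M j).card := by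
      intro j hj hcard
      apply ih (t - j) _ _ hcard
      · intro v hv
        rw [hsl] at hv
        have := hs _ hv
        rw [Fin.sum_univ_succ] at this
        simp at this
        omega
      · intro v hv i hi
        rw [hsl] at hv ⊢
        have := hN _ hv i.succ (by simpa using hi)
        rw [← Fin.cons_update] at this
        simpa using this
    have hshift : ∀ j, (sl N (j+1)).card ≤ (sl M j).card := by
      intro j
      apply Finset.card_le_card
      intro v hv
      rw [hsl] at hv ⊢
      have := hN _ hv 0 (by simp)
      simpa using this
    have hlow : ∀ j ∈ Finset.range (c+1), (sl N j).card ≤ (sl M j).card := by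
      intro j hj
      rw [Finset.mem_range] at hj
      apply hstep j (by omega)
      rcases Nat.lt_succ_iff_lt_or_eq.mp hj with h | h
      · have h1 := hle (Finset.range c)
        rw [← Finset.add_sum_erase _ _ (Finset.mem_range.mpr h)] at h1
        have h2 : ∑ i ∈ (Finset.range c).erase j, 1 ≤
            ∑ i ∈ (Finset.range c).erase j, (sl M i).card := by
          apply Finset.sum_le_sum
          intro i hi
          rw [Nat.succ_le_iff, Finset.card_pos, Finset.nonempty_iff_ne_empty]
          exact hmin i (Finset.mem_range.mp (Finset.mem_of_mem_erase hi))
        rw [Finset.sum_const, Finset.card_erase_of_mem (Finset.mem_range.mpr h)] at h2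
        simp at h2
        omega
      · subst h
        simp [hc]
    have e1 : t + 2 = (c + 1) + (t + 1 - c) := by omega
    have e2 : t + 1 = c + (t + 1 - c) := by omega
    rw [hNtot]
    refine le_trans ?_ (hle (Finset.range (t+1)))
    have f1 := Finset.sum_range_add (fun j => (sl N j).card) (c + 1) (t + 1 - c)
    have f2 := Finset.sum_range_add (fun j => (sl M j).card) c (t + 1 - c)
    rw [← e1] at f1
    rw [← e2] at f2
    rw [f1, f2]
    refine Nat.add_le_add ?_ ?_
    · refine (Finset.sum_le_sum hlow).trans ?_
      rw [Finset.sum_range_succ]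
      simp [hc]
    · apply Finset.sum_le_sum
      intro j _
      have := hshift (c + j)
      rwa [show c + 1 + j = c + j + 1 by ring]

theorem greedy_aux {K V ι : Type*} [Field K] [AddCommGroup V] [Module K V] [LinearOrder ι]
    (f : ι → V) (D : Finset ι) :
    Set.finrank K (f '' (D : Set ι)) =
      Set.ncard {u | u ∈ D ∧ f u ∉ Submodule.span K (f '' {v | v ∈ D ∧ v < u})} := by
  classical
  induction D using Finset.induction_on_max with
  | empty => rw [Set.finrank, Finset.coe_empty, Set.image_empty, Submodule.span_empty, finrank_bot]; simp
  | insert a s ha ih =>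
    have has : a ∉ s := fun h => lt_irrefl _ (ha a h)
    have e1 : {v | v ∈ insert a s ∧ v < a} = (s : Set ι) := by
      ext v
      simp only [Finset.mem_insert, Set.mem_ofPred_eq, Finset.mem_coe]
      constructor
      · rintro ⟨rfl | h, h2⟩
        · exact absurd h2 (lt_irrefl _)
        · exact h
      · intro h; exact ⟨Or.inr h, ha v h⟩
    have e2 : ∀ u ∈ s, {v | v ∈ insert a s ∧ v < u} = {v | v ∈ s ∧ v < u} := by
      intro u hu
      ext v
      simp only [Finset.mem_insert, Set.mem_ofPred_eq]
      constructor
      · rintro ⟨rfl | h, h2⟩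
        · exact absurd h2 (ha u hu).not_gt
        · exact ⟨h, h2⟩
      · rintro ⟨h, h2⟩; exact ⟨Or.inr h, h2⟩
    have hfin : {u | u ∈ s ∧ f u ∉ Submodule.span K (f '' {v | v ∈ s ∧ v < u})}.Finite :=
      s.finite_toSet.subset (fun u hu => hu.1)
    by_cases hsp : f a ∈ Submodule.span K (f '' (s : Set ι))
    · have : {u | u ∈ insert a s ∧ f u ∉ Submodule.span K (f '' {v | v ∈ insert a s ∧ v < u})}
          = {u | u ∈ s ∧ f u ∉ Submodule.span K (f '' {v | v ∈ s ∧ v < u})} := by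
        ext u
        simp only [Set.mem_ofPred_eq]
        constructor
        · rintro ⟨h1, h2⟩
          rcases Finset.mem_insert.mp h1 with rfl | h
          · rw [e1] at h2; exact absurd hsp h2
          · rw [e2 u h] at h2; exact ⟨h, h2⟩
        · rintro ⟨h1, h2⟩
          exact ⟨Finset.mem_insert_of_mem h1, by rwa [e2 u h1]⟩
      rw [this, ← ih, Finset.coe_insert, Set.image_insert_eq, Set.finrank, Set.finrank,
        Submodule.span_insert_eq_span hsp]
    · have : {u | u ∈ insert a s ∧ f u ∉ Submodule.span K (f '' {v | v ∈ insert a s ∧ v < u})}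
          = insert a {u | u ∈ s ∧ f u ∉ Submodule.span K (f '' {v | v ∈ s ∧ v < u})} := by
        ext u
        simp only [Set.mem_ofPred_eq, Set.mem_insert_iff]
        constructor
        · rintro ⟨h1, h2⟩
          rcases Finset.mem_insert.mp h1 with rfl | h
          · exact Or.inl rfl
          · rw [e2 u h] at h2; exact Or.inr ⟨h, h2⟩
        · rintro (rfl | ⟨h1, h2⟩)
          · exact ⟨Finset.mem_insert_self _ _, by rwa [e1]⟩
          · exact ⟨Finset.mem_insert_of_mem h1, by rwa [e2 u h1]⟩
      rw [this, Set.ncard_insert_of_notMem (fun h => has h.1) hfin, ← ih, Finset.coe_insert,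
        Set.image_insert_eq, Set.finrank, Set.finrank, Submodule.span_insert]
      have hfd : FiniteDimensional K (Submodule.span K (f '' (s : Set ι))) :=
        FiniteDimensional.span_of_finite K (s.finite_toSet.image f)
      have hfa : f a ≠ 0 := fun h => hsp (h ▸ Submodule.zero_mem _)
      have hdis : Submodule.span K {f a} ⊓ Submodule.span K (f '' (s : Set ι)) = ⊥ := by
        rw [← disjoint_iff, disjoint_comm, Submodule.disjoint_span_singleton' hfa]
        exact hsp
      have := Submodule.finrank_sup_add_finrank_inf_eq (Submodule.span K {f a})
        (Submodule.span K (f '' (s : Set ι)))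
      rw [hdis, finrank_bot, finrank_span_singleton hfa] at this
      omega

/-- exponent vectors of degree `t`. -/
noncomputable def expo (m t : ℕ) : Finset (Lex (Fin m → ℕ)) :=
  (Finset.piAntidiag Finset.univ t).map (toLex.toEmbedding)

theorem mem_expo {m t : ℕ} (u : Lex (Fin m → ℕ)) : u ∈ expo m t ↔ ∑ i, ofLex u i = t := by
  simp only [expo, Finset.mem_map, Finset.mem_piAntidiag]
  constructor
  · rintro ⟨a, ⟨h, _⟩, rfl⟩; exact h
  · intro h; exact ⟨ofLex u, ⟨h, by simp⟩, rfl⟩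

noncomputable def monoQ {K : Type*} [Field K] {m : ℕ} (I : Ideal (MvPolynomial (Fin m) K))
    (u : Lex (Fin m → ℕ)) : MvPolynomial (Fin m) K ⧸ I :=
  Ideal.Quotient.mkₐ K I (monomial (Finsupp.equivFunOnFinite.symm (ofLex u)) 1)

theorem hilb_eq_finrank {K : Type*} [Field K] {m : ℕ} (I : Ideal (MvPolynomial (Fin m) K))
    (t : ℕ) : hilb I t = Set.finrank K (monoQ I '' (expo m t : Set (Lex (Fin m → ℕ)))) := by
  have : (homogeneousSubmodule (Fin m) K t).map (Ideal.Quotient.mkₐ K I).toLinearMap =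
      Submodule.span K (monoQ I '' (expo m t : Set (Lex (Fin m → ℕ)))) := by
    apply le_antisymm
    · rw [Submodule.map_le_iff_le_comap]
      intro p hp
      rw [mem_homogeneousSubmodule] at hp
      rw [p.as_sum]
      apply Submodule.sum_mem
      intro d hd
      have hd' : Finsupp.degree d = t := by
        have := hp (mem_support_iff.mp hd)
        rw [Finsupp.degree_eq_weight_one]; exact this
      have : monomial d (coeff d p) = coeff d p • (monomial d 1 : MvPolynomial (Fin m) K) := by
        rw [smul_monomial]; simp
      rw [this]
      apply Submodule.smul_mem
      rw [Submodule.mem_comap]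
      apply Submodule.subset_span
      refine ⟨toLex d, ?_, ?_⟩
      · rw [Finset.mem_coe, mem_expo]
        rw [← hd', Finsupp.degree_eq_sum]
        rfl
      · have : Finsupp.equivFunOnFinite.symm (ofLex (toLex (d : Fin m → ℕ))) = d := by
          ext; rfl
        simp only [monoQ]
        erw [this]
        rfl
    · rw [Submodule.span_le]
      rintro _ ⟨u, hu, rfl⟩
      rw [Finset.mem_coe, mem_expo] at hu
      refine ⟨monomial (Finsupp.equivFunOnFinite.symm (ofLex u)) 1, ?_, rfl⟩
      rw [SetLike.mem_coe, mem_homogeneousSubmodule]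
      apply isHomogeneous_monomial
      rw [Finsupp.degree_eq_sum, ← hu]
      rfl
  rw [hilb, this, Set.finrank]

theorem monoQ_mul {K : Type*} [Field K] {m : ℕ} (I : Ideal (MvPolynomial (Fin m) K))
    (u : Lex (Fin m → ℕ)) (i : Fin m) :
    Ideal.Quotient.mkₐ K I (X i) * monoQ I u = monoQ I (u + toLex (Pi.single i 1)) := by
  rw [monoQ, monoQ, ← map_mul, X, monomial_mul, one_mul]
  congr 2
  congr 1
  ext j
  simp [Finsupp.single_apply, Pi.single_apply, add_comm, eq_comm]

theorem macaulay_small {K : Type*} [Field K] {m : ℕ} (I : Ideal (MvPolynomial (Fin m) K))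
    (t : ℕ) (h : hilb I t ≤ t) : hilb I (t+1) ≤ hilb I t := by
  classical
  let std : ℕ → Set (Lex (Fin m → ℕ)) := fun t => {u | u ∈ expo m t ∧ monoQ I u ∉
    Submodule.span K (monoQ I '' {v | v ∈ expo m t ∧ v < u})}
  have hfin : ∀ t, (std t).Finite := fun t => (expo m t).finite_toSet.subset (fun u hu => hu.1)
  have hc : ∀ t, hilb I t = ((hfin t).toFinset.map ofLex.toEmbedding).card := by
    intro t
    rw [Finset.card_map, ← Set.ncard_eq_toFinset_card _ (hfin t), hilb_eq_finrank, greedy_aux]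
    rfl
  rw [hc] at h
  rw [hc, hc]
  apply comb_aux m t _ _ h
  · intro u hu
    rw [Finset.mem_map] at hu
    obtain ⟨u, hu, rfl⟩ := hu
    rw [Set.Finite.mem_toFinset] at hu
    exact (mem_expo u).mp hu.1
  · intro u hu i hi
    rw [Finset.mem_map] at hu ⊢
    obtain ⟨u, hu, rfl⟩ := hu
    rw [Set.Finite.mem_toFinset] at hu
    simp only [Equiv.coe_toEmbedding] at hi ⊢
    set w : Lex (Fin m → ℕ) := toLex (Function.update (ofLex u) i (ofLex u i - 1)) with hw
    refine ⟨w, ?_, rfl⟩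
    rw [Set.Finite.mem_toFinset]
    have huw : u = w + toLex (Pi.single i 1) := by
      apply ofLex.injective
      funext j
      by_cases hj : j = i
      · subst hj
        change ofLex u j = Function.update (ofLex u) j (ofLex u j - 1) j +
          (Pi.single j 1 : Fin m → ℕ) j
        rw [Function.update_self, Pi.single_eq_same]; omega
      · change ofLex u j = Function.update (ofLex u) i (ofLex u i - 1) j +
          (Pi.single i 1 : Fin m → ℕ) j
        simp [hj]
    have hsum : ∀ v : Lex (Fin m → ℕ),
        ∑ j, ofLex (v + (toLex (Pi.single i 1) : Lex (Fin m → ℕ))) j = ∑ j, ofLex v j + 1 := by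
      intro v
      change ∑ j, (ofLex v j + (Pi.single i 1 : Fin m → ℕ) j) = _
      rw [Finset.sum_add_distrib, Finset.sum_pi_single']
      simp
    have h1 := (mem_expo u).mp hu.1
    refine ⟨?_, ?_⟩
    · rw [mem_expo]
      have := hsum w
      rw [← huw] at this
      omega
    · intro hmem
      apply hu.2
      have h2 := Submodule.mem_map_of_mem (f := LinearMap.mulLeft K (Ideal.Quotient.mkₐ K I (X i)))
        hmem
      rw [LinearMap.mulLeft_apply, monoQ_mul, ← huw, Submodule.map_span] at h2
      refine Submodule.span_mono ?_ h2
      rintro _ ⟨_, ⟨v, ⟨hv1, hv2⟩, rfl⟩, rfl⟩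
      refine ⟨v + toLex (Pi.single i 1), ⟨?_, ?_⟩, ?_⟩
      · rw [mem_expo] at hv1 ⊢
        rw [hsum, hv1]
      · rw [huw]
        exact add_lt_add_left hv2 _
      · rw [LinearMap.mulLeft_apply, monoQ_mul]

theorem finrank_map_aux {K V W : Type*} [Field K] [AddCommGroup V] [Module K V]
    [AddCommGroup W] [Module K W] [FiniteDimensional K V] (f : V →ₗ[K] W) (U : Submodule K V)
    (h : LinearMap.ker f ≤ U) :
    Module.finrank K (U.map f) + Module.finrank K (LinearMap.ker f) = Module.finrank K U := by
  have c6 := LinearMap.finrank_range_add_finrank_ker (f ∘ₗ U.subtype)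
  rw [LinearMap.range_comp, Submodule.range_subtype, LinearMap.ker_comp] at c6
  rw [← c6]
  congr 1
  exact (Submodule.comapSubtypeEquivOfLe h).finrank_eq.symm

theorem hilb_section {K : Type*} [Field K] {m : ℕ} (I J : Ideal (MvPolynomial (Fin m) K))
    (s : ℕ) (L : MvPolynomial (Fin m) K) (hL : L.IsHomogeneous 1)
    (hIJ : ∀ p ∈ I, p.IsHomogeneous (s+1) → p ∈ J) (hLJ : L ∈ J)
    (hreg : ∀ p : MvPolynomial (Fin m) K, p.IsHomogeneous s → L * p ∈ I → p ∈ I) :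
    hilb J (s+1) + hilb I s ≤ hilb I (s+1) := by
  let H := homogeneousSubmodule (Fin m) K (s+1)
  let H' := homogeneousSubmodule (Fin m) K s
  have hfd : ∀ t, FiniteDimensional K (homogeneousSubmodule (Fin m) K t) := by
    intro t
    exact Module.Finite.iff_fg.mpr (homogeneousSubmodule_fg _ _ t)
  let φ : H →ₗ[K] (MvPolynomial (Fin m) K ⧸ J) := (Ideal.Quotient.mkₐ K J).toLinearMap.domRestrict H
  let ψ : H →ₗ[K] (MvPolynomial (Fin m) K ⧸ I) := (Ideal.Quotient.mkₐ K I).toLinearMap.domRestrict H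
  let ψ' : H' →ₗ[K] (MvPolynomial (Fin m) K ⧸ I) :=
    (Ideal.Quotient.mkₐ K I).toLinearMap.domRestrict H'
  let μ : H' →ₗ[K] H := ((LinearMap.mulLeft K L).domRestrict H').codRestrict H (by
    rintro ⟨p, hp⟩
    have := hL.mul ((mem_homogeneousSubmodule _ _).mp hp)
    rw [add_comm] at this
    exact (mem_homogeneousSubmodule _ _).mpr this)
  have a1 : hilb J (s+1) = Module.finrank K (LinearMap.range φ) := by
    rw [hilb, LinearMap.range_domRestrict]
  have a2 : hilb I (s+1) = Module.finrank K (LinearMap.range ψ) := by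
    rw [hilb, LinearMap.range_domRestrict]
  have a3 : hilb I s = Module.finrank K (LinearMap.range ψ') := by
    rw [hilb, LinearMap.range_domRestrict]
  have hkerφ : ∀ x : H, x ∈ LinearMap.ker φ ↔ (x : MvPolynomial (Fin m) K) ∈ J := fun x =>
    Ideal.Quotient.eq_zero_iff_mem
  have hkerψ : ∀ x : H, x ∈ LinearMap.ker ψ ↔ (x : MvPolynomial (Fin m) K) ∈ I := fun x =>
    Ideal.Quotient.eq_zero_iff_mem
  have hkerψ' : ∀ x : H', x ∈ LinearMap.ker ψ' ↔ (x : MvPolynomial (Fin m) K) ∈ I := fun x =>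
    Ideal.Quotient.eq_zero_iff_mem
  have b1 : LinearMap.ker ψ ≤ LinearMap.ker φ := by
    intro x hx
    rw [hkerψ] at hx
    rw [hkerφ]
    exact hIJ _ hx ((mem_homogeneousSubmodule _ _).mp x.2)
  have b2 : LinearMap.ker (ψ ∘ₗ μ) = LinearMap.ker ψ' := by
    ext x
    rw [LinearMap.mem_ker, LinearMap.comp_apply, ← LinearMap.mem_ker, hkerψ, hkerψ']
    constructor
    · intro h
      exact hreg _ ((mem_homogeneousSubmodule _ _).mp x.2) h
    · intro h
      exact I.mul_mem_left L h
  have b3 : LinearMap.range (ψ ∘ₗ μ) ≤ (LinearMap.ker φ).map ψ := by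
    rintro _ ⟨x, rfl⟩
    refine ⟨μ x, ?_, rfl⟩
    rw [SetLike.mem_coe, hkerφ]
    exact J.mul_mem_right _ hLJ
  have c1 := LinearMap.finrank_range_add_finrank_ker φ
  have c2 := LinearMap.finrank_range_add_finrank_ker ψ
  have c3 := LinearMap.finrank_range_add_finrank_ker ψ'
  have c4 := LinearMap.finrank_range_add_finrank_ker (ψ ∘ₗ μ)
  rw [b2] at c4
  have c5 := Submodule.finrank_mono b3
  have c6 := finrank_map_aux ψ _ b1
  omega

/-- **Lemma.**  Let `Z ⊂ ℙ^r` be a finite reduced set of points whose `h`-vector has the form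
`(1, h_1, …, k, k-1, 0)`, with the `k` in degree `n`, `n ≥ k ≥ 2`, `3 ≤ h_1 ≤ r`, and `0` in all
degrees `≥ n+2`.  Let `J` be the artinian reduction of `I_Z` by a general linear form `L`
(here: any linear form not vanishing at any point of `Z`), and let `W` be the base locus of
`[J]_n` in `ℙ^{r-1}`, i.e. the subscheme of the hyperplane `L = 0` cut out by `⟨[I_Z]_n⟩ + (L)`.
Then either `W` is empty (the linear system `|[J]_n|` is basepoint free), or `W` is a
zero-dimensional scheme of degree at most `k`  (expressed via the eventual value `d` of the
Hilbert function of `R/(⟨[I_Z]_n⟩ + (L))`, which is `0` iff `W = ∅`, and otherwise is the degree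
of the zero-dimensional scheme `W`). -/
theorem points_type_k_kminus1_baseLocus_empty_or_finite
    {K : Type*} [Field K] [IsAlgClosed K] {r n k : ℕ}
    (Z : Finset (Fin (r + 1) → K))
    (hZ0 : ∀ v ∈ Z, v ≠ (0 : Fin (r + 1) → K))
    (hZdist : ∀ v ∈ Z, ∀ w ∈ Z, v ≠ w → ∀ c : K, w ≠ c • v)
    (hk : 2 ≤ k) (hkn : k ≤ n)
    (hh1lo : 3 ≤ hvec (pointsIdeal (↑Z : Set (Fin (r + 1) → K))) 1)
    (hh1hi : hvec (pointsIdeal (↑Z : Set (Fin (r + 1) → K))) 1 ≤ r)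
    (hhn : hvec (pointsIdeal (↑Z : Set (Fin (r + 1) → K))) n = k)
    (hhn1 : hvec (pointsIdeal (↑Z : Set (Fin (r + 1) → K))) (n + 1) + 1 = k)
    (hhtail : ∀ t, n + 2 ≤ t → hvec (pointsIdeal (↑Z : Set (Fin (r + 1) → K))) t = 0)
    (L : MvPolynomial (Fin (r + 1)) K) (hL : L.IsHomogeneous 1) (hL0 : L ≠ 0)
    (hLZ : ∀ v ∈ Z, eval v L ≠ 0) :
    (∃ N : ℕ, ∀ t, N ≤ t →
      hilb (compIdeal (pointsIdeal (↑Z : Set (Fin (r + 1) → K))) n ⊔ Ideal.span {L}) t = 0) ∨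
    (∃ d : ℕ, 0 < d ∧ d ≤ k ∧ ∃ N : ℕ, ∀ t, N ≤ t →
      hilb (compIdeal (pointsIdeal (↑Z : Set (Fin (r + 1) → K))) n ⊔ Ideal.span {L}) t = d) := by
  set I := pointsIdeal (↑Z : Set (Fin (r + 1) → K)) with hI
  set J := compIdeal I n ⊔ Ideal.span {L} with hJ
  obtain ⟨s, rfl⟩ : ∃ s, n = s + 1 := ⟨n - 1, by omega⟩
  have memI : ∀ p, p ∈ I ↔ ∀ v ∈ Z, ∀ c : K, eval (c • v) p = 0 := by
    intro p
    simp [hI, pointsIdeal, Submodule.mem_iInf, RingHom.mem_ker]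
  have key : hilb J (s+1) + hilb I s ≤ hilb I (s+1) := by
    apply hilb_section I J s L hL
    · intro p hp hp2
      apply Ideal.mem_sup_left
      exact Ideal.subset_span ⟨hp, (mem_homogeneousSubmodule _ _).mpr hp2⟩
    · exact Ideal.mem_sup_right (Ideal.mem_span_singleton_self L)
    · intro p hp hLp
      rw [memI] at hLp ⊢
      intro v hv c
      have hsm : ∀ (q : MvPolynomial (Fin (r+1)) K) (d : ℕ), q.IsHomogeneous d →
          eval (c • v) q = c ^ d * eval v q := by
        intro q d hq
        rw [eval_eq', eval_eq', Finset.mul_sum]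
        apply Finset.sum_congr rfl
        intro e he
        have hd : Finsupp.degree e = d := by
          rw [Finsupp.degree_eq_weight_one]; exact hq (mem_support_iff.mp he)
        rw [Finsupp.degree_eq_sum] at hd
        simp only [Pi.smul_apply, smul_eq_mul, mul_pow, Finset.prod_mul_distrib]
        rw [Finset.prod_pow_eq_pow_sum, hd]
        ring
      have h := hLp v hv c
      rw [map_mul, hsm L 1 hL] at h
      by_cases hc : c = 0
      · rw [hsm p s hp, hc, zero_pow (by omega), zero_mul]
      · rcases mul_eq_zero.mp h with h | h
        · exact absurd h (mul_ne_zero (pow_ne_zero _ hc) (hLZ v hv))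
        · exact h
  have hJk : hilb J (s+1) ≤ k := by
    have : hvec I (s+1) = hilb I (s+1) - hilb I s := rfl
    omega
  have hbd : ∀ j, hilb J (s+1+j) ≤ k := by
    intro j
    induction j with
    | zero => exact hJk
    | succ j ih => exact (macaulay_small J (s+1+j) (by omega)).trans ih
  have hanti : Antitone (fun j => hilb J (s+1+j)) := by
    apply antitone_nat_of_succ_le
    intro j
    exact macaulay_small J (s+1+j) (by have := hbd j; omega)
  obtain ⟨N, hN⟩ : ∃ N, ∀ j, hilb J (s+1+N) ≤ hilb J (s+1+j) :=
    ⟨Function.argmin (fun j => hilb J (s+1+j)), fun j => Function.argmin_le (fun j => hilb J (s+1+j)) j⟩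
  have hN' : ∀ t, s + 1 + N ≤ t → hilb J t = hilb J (s+1+N) := by
    intro t ht
    obtain ⟨j, rfl⟩ := Nat.exists_eq_add_of_le ht
    have h1 := hN (N + j)
    have h2 := hanti (Nat.le_add_right N j)
    rw [add_assoc (s+1)]
    exact le_antisymm h2 h1
  by_cases h0 : hilb J (s+1+N) = 0
  · left
    exact ⟨_, fun t ht => (hN' t ht).trans h0⟩
  · right
    exact ⟨_, Nat.pos_of_ne_zero h0, hbd N, _, hN'⟩
end
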